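/- arXiv:2206.08086 — 2 statements merged into one kernel-verified Lean document; each statement's English description precedes it below -/
import Mathlib

section
/- There exists a constant Λ > 0 such that for every integer N ≥ 2 there exist unit vectors x_1,…,x_N in ℝ³ with x_i ≠ ±x_j for i ≠ j (i.e., N distinct points of RP²) whose Green energy satisfies E_G(x_1,…,x_N) ≤ −(1/(4π))·N·log N + (1/(2π))·(c_⋄ + 1 − (3/2)·log 2)·N + Λ·√N·log N. -/
open scoped Real RealInnerProductSpace Classical

noncomputable section

/-- Points of `ℝ³` (unit vectors represent points of `RP²`). -/
abbrev Esp := EuclideanSpace ℝ (Fin 3)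

/-- Projective logarithmic energy of `x₁,…,x_N`:
`-∑_{i ≠ j} log √(1 - ⟨x_i, x_j⟩²)` over ordered pairs of distinct indices. -/
def EPlog {N : ℕ} (x : Fin N → Esp) : ℝ :=
  -∑ i, ∑ j, if i = j then 0 else Real.log (Real.sqrt (1 - ⟪x i, x j⟫^2))

/-- Green energy of `N` points of `RP²`:
`E_G = (1/(2π))·(E^P_log - N(N-1)(1 - log 2))`. -/
def EGreen {N : ℕ} (x : Fin N → Esp) : ℝ :=
  (1 / (2*π)) * (EPlog x - (N:ℝ) * ((N:ℝ) - 1) * (1 - Real.log 2))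

/-- The constant `c_⋄` of the quasioptimal Diamond ensemble. -/
def cdiamond : ℝ :=
  (19120 * Real.log 239 - 2270 * Real.log 227 - 1460 * Real.log 73
    - 265 * Real.log 53 - 1935 * Real.log 43 - 930 * Real.log 31
    - 1710 * Real.log 19 - 1938 * Real.log 17 + 19825 * Real.log 13
    + 1750 * Real.log 7 - 4250 * Real.log 5 - 131307 * Real.log 3
    + 56586 * Real.log 2 - 7170) / 14340

/-!
Take a family of parallels of the open upper hemisphere, with heights `0 < z₀ < z₁ < ⋯ < 1`, and
put `r k` equispaced points on the `k`-th one. The proof estimates the energy of this family.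

* Interaction of different parallels. For unit vectors `x`, `y` at fixed heights,
  `1 - ⟨x, y⟩²` is the product of two squared distances `|A - B e^{iα}|²` in the plane, so averages
  of its logarithm over rotations by roots of unity are explicit (`pairLog_average`), with limit
  `-2 * meanKer z w`. Choosing the rotations of the parallels one after the other, each interaction
  can be replaced by its mean, up to an arbitrarily small error (`exists_rotations`).
* Points on the same parallel. The product of the differences of roots of unity gives the energy
  up to a correction of size `1 / (z r)` per point, caused by nearly antipodal points
  (`pairLog_same`). Both estimates together give `exists_points`.
* Choice of the heights. Let `z k` be the midpoint of the interval of length `r k / N` corresponding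
  to the band. Abel summation turns the sum of all mean interactions into a midpoint sum for the
  convex function `phi`, whose integral over `[0, 1]` is `log 2 - 1/2`; the error of the midpoint
  rule is `r ^ 3 / (12 N (1 - z ^ 2))` per band to leading order (`mean_energy_le`).
* Choice of the sizes. With `w = r ^ 2 / (6 N (1 - z ^ 2))`, the bands contribute
  `-log (6 N) / 2 + (w - log w) / 2` per point, which is minimal for `w = 1`, that is for
  `r = √(6 N (1 - z ^ 2))`. With this choice the excess over the minimum is `o(1)` per point away
  from the pole and from the equator and bounded everywhere, hence `o(N)` in total
  (`sum_excess_le`).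

The resulting bound for the projective energy is
`N² (1 - log 2) - (N log N) / 2 + ((1 - log 3) / 2 - (log 2) / 2) N + o(N)`. Since
`(1 - log 3) / 2 < c_⋄` (`const_lt_cdiamond`), the energy is eventually smaller than the target even
without the term in `√N log N`. The remaining finitely many `N` are absorbed by `Λ`.
-/

/-! ### The constant -/

/-- First Padé bound for the logarithm of a ratio, with an error of third order in `a - b`. -/
lemma log_ratio_lower {a b : ℝ} (hb : 0 < b) (hab : b ≤ a) :
    2 * (a - b) / (a + b) ≤ Real.log a - Real.log b := by
  have h := Real.le_log_one_add_of_nonneg (x := (a - b) / b) (div_nonneg (by linarith) hb.le)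
  have h1 : 1 + (a - b) / b = a / b := by field_simp; ring
  rw [h1, Real.log_div (by linarith) hb.ne'] at h
  convert h using 1
  field_simp
  ring

/-- The constant `(1 - log 3)/2` reached by bands of about `√(6N) ρ` points, with `ρ` the radius
of the parallel, is smaller than `c_⋄`. Each prime is compared with a neighbouring smooth number,
which reduces everything to the known decimals of `log 2`, `log 3` and `log 5`. -/
lemma const_lt_cdiamond : (1 - Real.log 3) / 2 < cdiamond := by
  have m (a b : ℝ) (ha : 0 < a) (hb : 0 < b) : Real.log (a * b) = Real.log a + Real.log b :=
    Real.log_mul ha.ne' hb.ne'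
  have pw (a : ℝ) (k : ℕ) : Real.log (a ^ k) = k * Real.log a := Real.log_pow _ _
  have l2 := Real.log_two_gt_d9
  have l2' := Real.log_two_lt_d9
  have l3 := Real.log_three_gt_d9
  have l3' := Real.log_three_lt_d9
  have l5 := Real.log_five_gt_d9
  have l5' := Real.log_five_lt_d9
  have h7 := log_ratio_lower (a := 7 ^ 2) (b := 2 ^ 4 * 3) (by norm_num) (by norm_num)
  have h13 := log_ratio_lower (a := 13 ^ 2) (b := 2 ^ 3 * (3 * 7)) (by norm_num) (by norm_num)
  have h17 := log_ratio_lower (a := 17 * 3) (b := 2 * 5 ^ 2) (by norm_num) (by norm_num)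
  have h17' := log_ratio_lower (a := 2 ^ 3 * (3 * 5)) (b := 17 * 7) (by norm_num) (by norm_num)
  have h239 := log_ratio_lower (a := 239 ^ 2) (b := 2 ^ 5 * (3 * (5 * (7 * 17))))
    (by norm_num) (by norm_num)
  have h19 := log_ratio_lower (a := 2 ^ 5 * 3) (b := 19 * 5) (by norm_num) (by norm_num)
  have h31 := log_ratio_lower (a := 2 ^ 5) (b := 31) (by norm_num) (by norm_num)
  have h43 := log_ratio_lower (a := 2 ^ 3 * 3 ^ 3) (b := 43 * 5) (by norm_num) (by norm_num)
  have h53 := log_ratio_lower (a := 2 * 3 ^ 3) (b := 53) (by norm_num) (by norm_num)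
  have h73 := log_ratio_lower (a := 3 * 5 ^ 2) (b := 73) (by norm_num) (by norm_num)
  have h227 := log_ratio_lower (a := 2 ^ 2 * (3 * 19)) (b := 227) (by norm_num) (by norm_num)
  simp (discharger := positivity) only [m, pw] at h7 h13 h17 h17' h239 h19 h31 h43 h53 h73 h227
  norm_num at h7 h13 h17 h17' h239 h19 h31 h43 h53 h73 h227
  unfold cdiamond
  linarith

/-! ### Products over roots of unity -/

lemma prod_sub_pow_mul {R : Type*} [CommRing R] [IsDomain R] {ζ : R} {n : ℕ} (hn : 0 < n)
    (h : IsPrimitiveRoot ζ n) (x y : R) :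
    ∏ k ∈ Finset.range n, (x - ζ ^ k * y) = x ^ n - y ^ n := by
  rw [h.pow_sub_pow_eq_prod_sub_mul x y hn]
  refine Finset.prod_bij (fun k _ => ζ ^ k) ?_ ?_ ?_ ?_
  · intro k _
    rw [Polynomial.mem_nthRootsFinset hn, ← pow_mul, mul_comm, pow_mul, h.pow_eq_one, one_pow]
  · intro a ha b hb hab
    exact h.pow_inj (Finset.mem_range.1 ha) (Finset.mem_range.1 hb) hab
  · intro b hb
    have : NeZero n := ⟨hn.ne'⟩
    obtain ⟨i, hi, hi'⟩ := h.eq_pow_of_pow_eq_one ((Polynomial.mem_nthRootsFinset hn _).1 hb)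
    exact ⟨i, Finset.mem_range.2 hi, hi'⟩
  · intro k _
    rfl

/-- Product of the differences between one root of unity and all the others. It is the
value at `ζ ^ i` of `(X ^ n - 1) / (X - ζ ^ i)`. -/
lemma prod_erase_pow_sub_pow {ζ : ℂ} {n i : ℕ} (hn : 0 < n) (hi : i < n)
    (h : IsPrimitiveRoot ζ n) :
    ∏ k ∈ (Finset.range n).erase i, (ζ ^ i - ζ ^ k) = n * (ζ ^ i) ^ (n - 1) := by
  have hC : IsPrimitiveRoot (Polynomial.C ζ) n :=
    h.map_of_injective (f := Polynomial.C) Polynomial.C_injective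
  have h1 := prod_sub_pow_mul hn hC Polynomial.X 1
  have h2 := Finset.mul_prod_erase (Finset.range n)
    (fun k => (Polynomial.X - Polynomial.C ζ ^ k * 1 : Polynomial ℂ)) (Finset.mem_range.2 hi)
  have h3 := Commute.mul_geom_sum₂ (Commute.all (Polynomial.X : Polynomial ℂ) (Polynomial.C ζ ^ i)) n
  have h4 : (Polynomial.C ζ ^ i) ^ n = 1 := by
    rw [← pow_mul, mul_comm, pow_mul, hC.pow_eq_one, one_pow]
  rw [h4] at h3
  rw [h1, one_pow, ← h3, mul_one] at h2
  have hne : (Polynomial.X - Polynomial.C ζ ^ i : Polynomial ℂ) ≠ 0 := by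
    rw [← map_pow]; exact Polynomial.X_sub_C_ne_zero _
  have h5 := congrArg (Polynomial.eval (ζ ^ i)) (mul_left_cancel₀ hne h2)
  simp only [Polynomial.eval_prod, Polynomial.eval_finsetSum, mul_one, Polynomial.eval_sub,
    Polynomial.eval_X, Polynomial.eval_pow, Polynomial.eval_C, Polynomial.eval_mul] at h5
  rw [h5, Finset.sum_congr rfl (g := fun _ => (ζ ^ i) ^ (n - 1))]
  · simp
  · intro k hk
    rw [← pow_add]
    congr 1
    have := Finset.mem_range.1 hk
    omega

lemma norm_sq_sub_mul_exp (A B t : ℝ) :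
    ‖(A : ℂ) - B * Complex.exp (t * Complex.I)‖ ^ 2 = A ^ 2 + B ^ 2 - 2 * A * B * Real.cos t := by
  rw [Complex.sq_norm, Complex.normSq_apply]
  simp [Complex.exp_ofReal_mul_I_re, Complex.exp_ofReal_mul_I_im]
  nlinarith [Real.sin_sq_add_cos_sq t]

/-- Sums of `log ‖A - B e^{it}‖²` over a coset of the `M`-th roots of unity. -/
lemma two_log_pow_sub_le {A B : ℝ} (hB : 0 ≤ B) (hAB : B < A) {M : ℕ} (hM : 0 < M) (s : ℝ) :
    2 * Real.log (A ^ M - B ^ M) ≤ ∑ k ∈ Finset.range M,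
      Real.log (A ^ 2 + B ^ 2 - 2 * A * B * Real.cos (s + 2 * π * k / M)) := by
  have hz := Complex.isPrimitiveRoot_exp M hM.ne'
  set ζ := Complex.exp (2 * π * Complex.I / M) with hζ
  have hk (k : ℕ) : A ^ 2 + B ^ 2 - 2 * A * B * Real.cos (s + 2 * π * k / M)
      = ‖(A : ℂ) - ζ ^ k * (B * Complex.exp (s * Complex.I))‖ ^ 2 := by
    rw [← norm_sq_sub_mul_exp, hζ, ← Complex.exp_nat_mul]
    congr 3
    rw [mul_left_comm, ← Complex.exp_add]
    congr 2
    push_cast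
    ring
  have hne (k : ℕ) : ‖(A : ℂ) - ζ ^ k * (B * Complex.exp (s * Complex.I))‖ ^ 2 ≠ 0 := by
    rw [← hk]
    have := Real.cos_le_one (s + 2 * π * k / M)
    have h0 : 0 < (A - B) ^ 2 := by have := sub_pos.2 hAB; positivity
    nlinarith [mul_nonneg (hB.trans hAB.le) hB]
  simp_rw [hk]
  rw [← Real.log_prod (fun k _ => hne k), Finset.prod_pow, ← norm_prod, prod_sub_pow_mul hM hz,
    Real.log_pow]
  push_cast
  have hpow : B ^ M < A ^ M := pow_lt_pow_left₀ hAB hB hM.ne'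
  gcongr
  refine le_trans ?_ (norm_sub_norm_le _ _)
  simp [Complex.norm_exp_ofReal_mul_I, abs_of_nonneg hB, abs_of_nonneg (hB.trans hAB.le)]

lemma sum_log_erase {n i : ℕ} (hi : i < n) :
    ∑ k ∈ (Finset.range n).erase i,
      Real.log (2 - 2 * Real.cos (2 * π * i / n - 2 * π * k / n)) = 2 * Real.log n := by
  have hn : 0 < n := by omega
  have hz := Complex.isPrimitiveRoot_exp n hn.ne'
  set ζ := Complex.exp (2 * π * Complex.I / n) with hζ
  have hζ' (k : ℕ) : ζ ^ k = Complex.exp ((2 * π * k / n : ℝ) * Complex.I) := by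
    rw [hζ, ← Complex.exp_nat_mul]
    congr 1
    push_cast
    ring
  have hk (k : ℕ) : 2 - 2 * Real.cos (2 * π * i / n - 2 * π * k / n) = ‖ζ ^ i - ζ ^ k‖ ^ 2 := by
    rw [hζ', hζ', Complex.sq_norm, Complex.normSq_apply, Real.cos_sub]
    simp only [Complex.sub_re, Complex.sub_im, Complex.exp_ofReal_mul_I_re,
      Complex.exp_ofReal_mul_I_im]
    nlinarith [Real.sin_sq_add_cos_sq (2 * π * i / n), Real.sin_sq_add_cos_sq (2 * π * k / n)]
  simp_rw [hk]
  rw [← Real.log_prod, Finset.prod_pow, ← norm_prod, prod_erase_pow_sub_pow hn hi hz, Real.log_pow]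
  · have h1 : ‖ζ‖ = 1 := hz.norm'_eq_one hn.ne'
    simp [h1]
  · intro k hk'
    obtain ⟨h1, h2⟩ := Finset.mem_erase.1 hk'
    rw [pow_ne_zero_iff two_ne_zero, norm_ne_zero_iff, sub_ne_zero]
    exact fun h => h1 (hz.pow_inj hi (Finset.mem_range.1 h2) h).symm

/-! ### Interactions of points on parallels -/

/-- `log (1 - ⟨x, y⟩²)` for two unit vectors at heights `z`, `w` whose longitudes differ by `α`. -/
def pairLog (z w α : ℝ) : ℝ :=
  Real.log (1 - (z * w + √(1 - z ^ 2) * √(1 - w ^ 2) * Real.cos α) ^ 2)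

/-- Mean over the longitude of `-log √(1 - ⟨x, y⟩²)` for points at heights `0 ≤ w ≤ z < 1`; the
larger height is the first argument. Only the bound `pairLog_average` is needed. -/
def meanKer (z w : ℝ) : ℝ :=
  Real.log 2 - Real.log (1 + z) - Real.log (1 - w ^ 2) / 2

lemma pairLog_even (z w α : ℝ) : pairLog z w (-α) = pairLog z w α := by
  simp [pairLog]

lemma pairLog_symm (z w α : ℝ) : pairLog z w α = pairLog w z α := by
  simp only [pairLog]
  rw [mul_comm z w, mul_comm √(1 - z ^ 2)]

/-- For longitude difference `α`, one minus the inner product of two unit vectors is a squared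
distance `|A - B e^{iα}|²` in the plane. -/
lemma one_sub_inner_eq {z w : ℝ} (hz0 : 0 ≤ z) (hz1 : z ≤ 1) (hw0 : -1 ≤ w) (hw1 : w ≤ 1) (α : ℝ) :
    1 - (z * w + √(1 - z ^ 2) * √(1 - w ^ 2) * Real.cos α) =
      √((1 + z) * (1 - w) / 2) ^ 2 + √((1 - z) * (1 + w) / 2) ^ 2
        - 2 * √((1 + z) * (1 - w) / 2) * √((1 - z) * (1 + w) / 2) * Real.cos α := by
  have h1 : 0 ≤ 1 + z := by linarith
  have h2 : 0 ≤ 1 - z := by linarith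
  have h3 : 0 ≤ 1 + w := by linarith
  have h4 : 0 ≤ 1 - w := by linarith
  have h5 : 2 * (√((1 + z) * (1 - w) / 2) * √((1 - z) * (1 + w) / 2))
      = √(1 - z ^ 2) * √(1 - w ^ 2) := by
    rw [← Real.sqrt_mul (show 0 ≤ (1 + z) * (1 - w) / 2 by positivity),
      ← Real.sqrt_mul (show 0 ≤ 1 - z ^ 2 by nlinarith), show (1 - z ^ 2) * (1 - w ^ 2)
      = 2 ^ 2 * ((1 + z) * (1 - w) / 2 * ((1 - z) * (1 + w) / 2)) by ring,
      Real.sqrt_mul (show (0 : ℝ) ≤ 2 ^ 2 by norm_num), Real.sqrt_sq (show (0 : ℝ) ≤ 2 by norm_num)]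
  rw [Real.sq_sqrt (by positivity), Real.sq_sqrt (by positivity), ← h5]
  ring

lemma log_pow_sub_pow {A B : ℝ} (hB : 0 ≤ B) (hAB : B < A) {M : ℕ} (hM : 0 < M) :
    Real.log (A ^ M - B ^ M) = M * Real.log A + Real.log (1 - (B / A) ^ M) := by
  have hA : 0 < A := hB.trans_lt hAB
  have h : (B / A) ^ M < 1 := pow_lt_one₀ (by positivity) ((div_lt_one hA).2 hAB) hM.ne'
  rw [← Real.log_pow, ← Real.log_mul (by positivity) (by linarith), mul_sub, mul_one, ← mul_pow,
    mul_div_cancel₀ _ hA.ne']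

lemma log_one_sub_pow_ge {q : ℝ} (hq : 0 ≤ q) (hq1 : q < 1) {M : ℕ} (hM : 0 < M) :
    Real.log (1 - q) ≤ Real.log (1 - q ^ M) := by
  apply Real.log_le_log (by linarith)
  have := pow_le_of_le_one hq hq1.le hM.ne'
  linarith

/-- Lower bound for sums of `pairLog` over `M` equispaced rotations. The error does not depend on
`M`, hence the averages are asymptotically at least `-2 * meanKer z w`. -/
lemma pairLog_average {z w : ℝ} (hw0 : 0 < w) (hwz : w < z) (hz1 : z < 1) :
    ∃ C : ℝ, 0 ≤ C ∧ ∀ M : ℕ, 0 < M → ∀ s : ℝ, -2 * M * meanKer z w - C ≤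
      ∑ k ∈ Finset.range M, pairLog z w (s + 2 * π * k / M) := by
  have hz0 : 0 < z := hw0.trans hwz
  have hw1 : w < 1 := hwz.trans hz1
  have h2 : 0 < 1 - z := by linarith
  have h4 : 0 < 1 - w := by linarith
  have hAB : √((1 - z) * (1 + w) / 2) < √((1 + z) * (1 - w) / 2) :=
    Real.sqrt_lt_sqrt (by positivity) (by nlinarith)
  have hAB' : √((1 - z) * (1 - w) / 2) < √((1 + z) * (1 + w) / 2) :=
    Real.sqrt_lt_sqrt (by positivity) (by nlinarith)
  have e1 := one_sub_inner_eq hz0.le hz1.le (by linarith) hw1.le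
  have e2 := one_sub_inner_eq (w := -w) hz0.le hz1.le (by linarith) (by linarith)
  simp only [sub_neg_eq_add, ← sub_eq_add_neg, neg_sq] at e2
  have hA2 : 2 * Real.log √((1 + z) * (1 - w) / 2) + 2 * Real.log √((1 + z) * (1 + w) / 2)
      = -2 * meanKer z w := by
    rw [Real.log_sqrt (by positivity), Real.log_sqrt (by positivity),
      Real.log_div (by positivity) (by norm_num), Real.log_div (by positivity) (by norm_num),
      Real.log_mul (by positivity) (by positivity), Real.log_mul (by positivity) (by positivity),
      meanKer, show 1 - w ^ 2 = (1 - w) * (1 + w) by ring,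
      Real.log_mul (by positivity) (by positivity)]
    ring
  set A := √((1 + z) * (1 - w) / 2)
  set B := √((1 - z) * (1 + w) / 2)
  set A' := √((1 + z) * (1 + w) / 2)
  set B' := √((1 - z) * (1 - w) / 2)
  have hB : 0 ≤ B := Real.sqrt_nonneg _
  have hB' : 0 ≤ B' := Real.sqrt_nonneg _
  have q1 : B / A < 1 := (div_lt_one (hB.trans_lt hAB)).2 hAB
  have q1' : B' / A' < 1 := (div_lt_one (hB'.trans_lt hAB')).2 hAB'
  have q0 : 0 ≤ B / A := div_nonneg hB (hB.trans hAB.le)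
  have q0' : 0 ≤ B' / A' := div_nonneg hB' (hB'.trans hAB'.le)
  have l1 : Real.log (1 - B / A) ≤ 0 := Real.log_nonpos (by linarith) (by linarith)
  have l1' : Real.log (1 - B' / A') ≤ 0 := Real.log_nonpos (by linarith) (by linarith)
  refine ⟨-2 * Real.log (1 - B / A) - 2 * Real.log (1 - B' / A'), by linarith, ?_⟩
  intro M hM s
  have hT (α : ℝ) : pairLog z w α = Real.log (A ^ 2 + B ^ 2 - 2 * A * B * Real.cos α)
      + Real.log (A' ^ 2 + B' ^ 2 - 2 * A' * B' * Real.cos (α + π)) := by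
    have p1 : 0 < A ^ 2 + B ^ 2 - 2 * A * B * Real.cos α := by
      have := Real.cos_le_one α
      have h0 : 0 < (A - B) ^ 2 := by have := sub_pos.2 hAB; positivity
      nlinarith [mul_nonneg (hB.trans hAB.le) hB]
    have p2 : 0 < A' ^ 2 + B' ^ 2 - 2 * A' * B' * Real.cos (α + π) := by
      have := Real.cos_le_one (α + π)
      have h0 : 0 < (A' - B') ^ 2 := by have := sub_pos.2 hAB'; positivity
      nlinarith [mul_nonneg (hB'.trans hAB'.le) hB']
    rw [← Real.log_mul p1.ne' p2.ne', ← e1, ← e2, pairLog, Real.cos_add_pi]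
    congr 1
    ring
  simp_rw [hT]
  rw [Finset.sum_add_distrib]
  have s1 := two_log_pow_sub_le hB hAB hM s
  have s2 := two_log_pow_sub_le hB' hAB' hM (s + π)
  have s3 (k : ℕ) : s + 2 * π * k / M + π = s + π + 2 * π * k / M := by ring
  simp_rw [s3]
  rw [log_pow_sub_pow hB hAB hM] at s1
  rw [log_pow_sub_pow hB' hAB' hM] at s2
  have t1 := log_one_sub_pow_ge q0 q1 hM
  have t2 := log_one_sub_pow_ge q0' q1' hM
  have hM2 := congrArg (fun x => (M : ℝ) * x) hA2
  linarith

lemma neg_inv_le_log_one_sub_pow {z : ℝ} (hz0 : 0 < z) (hz1 : z < 1) {r : ℕ} (hr : 0 < r) :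
    -(1 / (2 * z * r)) ≤ Real.log (1 - ((1 - z) / (1 + z)) ^ r) := by
  have hr' : (0 : ℝ) < r := by exact_mod_cast hr
  have h1 : (1 - z) / (1 + z) ≤ (1 + 2 * z)⁻¹ := by
    rw [div_le_iff₀ (by positivity), inv_mul_eq_div, le_div_iff₀ (by positivity)]
    nlinarith
  have h2 : ((1 - z) / (1 + z)) ^ r ≤ (1 + 2 * z * r)⁻¹ := by
    calc ((1 - z) / (1 + z)) ^ r ≤ ((1 + 2 * z)⁻¹) ^ r :=
          pow_le_pow_left₀ (div_nonneg (by linarith) (by linarith)) h1 r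
      _ ≤ (1 + 2 * z * r)⁻¹ := by
          rw [inv_pow]
          have := one_add_mul_le_pow (a := 2 * z) (by linarith) r
          gcongr
          linarith
  have h3 : 2 * z * r / (1 + 2 * z * r) ≤ 1 - ((1 - z) / (1 + z)) ^ r := by
    have : 2 * z * r / (1 + 2 * z * r) = 1 - (1 + 2 * z * r)⁻¹ := by field_simp; ring
    linarith
  have h4 : 0 < 2 * z * r / (1 + 2 * z * r) := by positivity
  refine le_trans ?_ (Real.log_le_log h4 h3)
  refine le_trans (le_of_eq ?_) (Real.one_sub_inv_le_log_of_pos h4)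
  field_simp
  ring

lemma cos_ne_one {r i k : ℕ} (hik : i ≠ k) (hi : i < r) (hk : k < r) :
    Real.cos (2 * π * i / r - 2 * π * k / r) ≠ 1 := by
  intro h
  obtain ⟨n, hn⟩ := (Real.cos_eq_one_iff _).1 h
  have hr' : (r : ℝ) ≠ 0 := by
    have : r ≠ 0 := by omega
    exact_mod_cast this
  have hn2 : (n : ℝ) * r = i - k := by
    field_simp at hn
    linarith
  have hn3 : n * (r : ℤ) = i - k := by exact_mod_cast hn2
  have hn4 : n = 0 := by
    have h5 : n < 1 := by by_contra hcon; nlinarith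
    have h6 : -1 < n := by by_contra hcon; nlinarith
    omega
  rw [hn4] at hn3
  omega

/-- Interaction of one of `r` equispaced points on the parallel at height `z` with the others.
The last term on the left comes from near-antipodal pairs, which matter close to the equator. -/
lemma pairLog_same {z : ℝ} (hz0 : 0 < z) (hz1 : z < 1) {r i : ℕ} (hi : i < r) :
    -2 * r * meanKer z z - Real.log (1 - z ^ 2) + 2 * Real.log r - 1 / (z * r) ≤
      ∑ k ∈ (Finset.range r).erase i, pairLog z z (2 * π * i / r - 2 * π * k / r) := by
  have hr : 0 < r := by omega
  have h2 : 0 < 1 - z := by linarith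
  have hzz : 0 < 1 - z ^ 2 := by nlinarith
  have hss : √(1 - z ^ 2) * √(1 - z ^ 2) = 1 - z ^ 2 := Real.mul_self_sqrt hzz.le
  have hAB' : √((1 - z) * (1 - z) / 2) < √((1 + z) * (1 + z) / 2) :=
    Real.sqrt_lt_sqrt (by positivity) (by nlinarith)
  have e2 := one_sub_inner_eq (w := -z) hz0.le hz1.le (by linarith) (by linarith)
  simp only [sub_neg_eq_add, ← sub_eq_add_neg, neg_sq] at e2
  have hq : √((1 - z) * (1 - z) / 2) / √((1 + z) * (1 + z) / 2) = (1 - z) / (1 + z) := by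
    rw [← Real.sqrt_div (by positivity), show (1 - z) * (1 - z) / 2 / ((1 + z) * (1 + z) / 2)
      = ((1 - z) / (1 + z)) ^ 2 by field_simp, Real.sqrt_sq (by positivity)]
  have hA2 : 2 * Real.log √((1 + z) * (1 + z) / 2) = 2 * Real.log (1 + z) - Real.log 2 := by
    rw [Real.log_sqrt (by positivity),
      Real.log_div (by positivity) (by norm_num), Real.log_mul (by positivity) (by positivity)]
    ring
  set A' := √((1 + z) * (1 + z) / 2)
  set B' := √((1 - z) * (1 - z) / 2)
  have hB' : 0 ≤ B' := Real.sqrt_nonneg _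
  have p2 (α : ℝ) : 0 < A' ^ 2 + B' ^ 2 - 2 * A' * B' * Real.cos (α + π) := by
    have := Real.cos_le_one (α + π)
    have h0 : 0 < (A' - B') ^ 2 := by have := sub_pos.2 hAB'; positivity
    nlinarith [mul_nonneg (hB'.trans hAB'.le) hB']
  have hT (k : ℕ) (hk : k ∈ (Finset.range r).erase i) :
      pairLog z z (2 * π * i / r - 2 * π * k / r) =
      (Real.log (1 - z ^ 2) - Real.log 2
        + Real.log (2 - 2 * Real.cos (2 * π * i / r - 2 * π * k / r)))
      + Real.log (A' ^ 2 + B' ^ 2 - 2 * A' * B' *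
          Real.cos (-(2 * π * i / r) + π + 2 * π * k / r)) := by
    obtain ⟨hk1, hk2⟩ := Finset.mem_erase.1 hk
    have hc := cos_ne_one (Ne.symm hk1) hi (Finset.mem_range.1 hk2)
    have hc' := lt_of_le_of_ne (Real.cos_le_one _) hc
    have e3 := e2 (2 * π * i / r - 2 * π * k / r + π)
    have p3 := p2 (2 * π * i / r - 2 * π * k / r)
    have hcos : Real.cos (-(2 * π * i / r) + π + 2 * π * k / r)
        = Real.cos (2 * π * i / r - 2 * π * k / r + π) := by
      rw [Real.cos_add_pi, ← Real.cos_pi_sub]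
      congr 1
      ring
    rw [hcos]
    generalize 2 * π * i / r - 2 * π * k / r = α at *
    rw [← Real.log_div hzz.ne' (by norm_num), ← Real.log_mul (by positivity) (by linarith),
      ← Real.log_mul (mul_pos (by positivity) (by linarith)).ne' p3.ne', ← e3, pairLog,
      Real.cos_add_pi, hss]
    congr 1
    ring
  rw [Finset.sum_congr rfl hT, Finset.sum_add_distrib, Finset.sum_add_distrib, sum_log_erase hi]
  have s2 := two_log_pow_sub_le hB' hAB' hr (-(2 * π * i / r) + π)
  rw [log_pow_sub_pow hB' hAB' hr, hq, ← Finset.add_sum_erase _ _ (Finset.mem_range.2 hi)] at s2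
  have e4 : A' ^ 2 + B' ^ 2 - 2 * A' * B' * Real.cos (-(2 * π * i / r) + π + 2 * π * i / r) = 2 := by
    rw [show -(2 * π * i / r) + π + 2 * π * i / r = 0 + π by ring, ← e2, Real.cos_add_pi, hss]
    simp
    ring
  rw [e4] at s2
  have t := neg_inv_le_log_one_sub_pow hz0 hz1 hr
  have t' : 1 / (z * r) = 2 * (1 / (2 * z * r)) := by field_simp
  have hM2 := congrArg (fun x => (r : ℝ) * x) hA2
  simp only [Finset.sum_const, Finset.card_erase_of_mem (Finset.mem_range.2 hi), Finset.card_range,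
    nsmul_eq_mul, Nat.cast_sub (show 1 ≤ r from hr), Nat.cast_one, meanKer]
  linarith

/-! ### Rotating the parallels -/

lemma sum_sum_symm (G : ℕ → ℕ → ℝ) (hG : ∀ j k, G j k = G k j) (p : ℕ) :
    ∑ j ∈ Finset.range p, ∑ k ∈ Finset.range p, G j k =
      ∑ k ∈ Finset.range p, (G k k + 2 * ∑ j ∈ Finset.range k, G j k) := by
  induction p with
  | zero => simp
  | succ n ih =>
    rw [Finset.sum_range_succ, Finset.sum_range_succ (fun k => G k k + _), ← ih]
    simp_rw [Finset.sum_range_succ _ n]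
    rw [Finset.sum_add_distrib, Finset.sum_congr rfl (fun k _ => hG n k)]
    ring

/-- Rotations can be chosen one after the other so that the total interaction is at most the sum
of the mean interactions: the average over the last rotation is under control whatever the
earlier ones are. -/
lemma exists_rotations (f : ℕ → ℕ → ℝ → ℝ) (a : ℕ → ℕ → ℝ) {M : ℕ} (hM : 0 < M) (p : ℕ)
    (h : ∀ k < p, ∀ j < k, ∀ s : ℝ,
      ∑ t ∈ Finset.range M, f j k (s + 2 * π * t / M) ≤ M * a j k) :
    ∃ θ : ℕ → ℝ, ∑ k ∈ Finset.range p, ∑ j ∈ Finset.range k, f j k (θ k - θ j) ≤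
      ∑ k ∈ Finset.range p, ∑ j ∈ Finset.range k, a j k := by
  induction p with
  | zero => exact ⟨0, by simp⟩
  | succ n ih =>
    obtain ⟨θ, hθ⟩ := ih (fun k hk => h k (by omega))
    have hsum : ∑ t ∈ Finset.range M, ∑ j ∈ Finset.range n, f j n (2 * π * t / M - θ j) ≤
        ∑ t ∈ Finset.range M, ∑ j ∈ Finset.range n, a j n := by
      rw [Finset.sum_comm, Finset.sum_const, Finset.card_range, nsmul_eq_mul, Finset.mul_sum]
      refine Finset.sum_le_sum fun j hj => ?_
      refine le_trans (le_of_eq ?_) (h n (by omega) j (Finset.mem_range.1 hj) (-θ j))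
      refine Finset.sum_congr rfl fun t _ => ?_
      congr 1
      ring
    obtain ⟨t, -, ht⟩ := Finset.exists_le_of_sum_le (by simpa using hM.ne') hsum
    refine ⟨Function.update θ n (2 * π * t / M), ?_⟩
    rw [Finset.sum_range_succ, Finset.sum_range_succ]
    refine add_le_add (le_trans (le_of_eq ?_) hθ) (le_trans (le_of_eq ?_) ht)
    · refine Finset.sum_congr rfl fun k hk => Finset.sum_congr rfl fun j hj => ?_
      rw [Finset.mem_range] at hk hj
      rw [Function.update_of_ne (by omega), Function.update_of_ne (by omega)]
    · refine Finset.sum_congr rfl fun j hj => ?_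
      rw [Finset.mem_range] at hj
      rw [Function.update_self, Function.update_of_ne (by omega)]

/-- The unit vector at height `z` and longitude `α`. -/
def spherePt (z α : ℝ) : Esp :=
  !₂[√(1 - z ^ 2) * Real.cos α, √(1 - z ^ 2) * Real.sin α, z]

lemma inner_spherePt (z w α β : ℝ) : ⟪spherePt z α, spherePt w β⟫ =
    z * w + √(1 - z ^ 2) * √(1 - w ^ 2) * Real.cos (α - β) := by
  simp [spherePt, PiLp.inner_apply, Fin.sum_univ_three, Real.cos_sub]
  ring

lemma norm_spherePt {z : ℝ} (h0 : 0 < z) (h1 : z < 1) (α : ℝ) : ‖spherePt z α‖ = 1 := by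
  have h : ‖spherePt z α‖ ^ 2 = 1 := by
    rw [← real_inner_self_eq_norm_sq, inner_spherePt, Real.mul_self_sqrt (by nlinarith)]
    simp
    ring
  exact (pow_eq_one_iff_of_nonneg (norm_nonneg _) two_ne_zero).1 h

lemma log_sqrt_spherePt {z w : ℝ} (h0 : 0 < z) (h1 : z < 1) (h0' : 0 < w) (h1' : w < 1)
    (α β : ℝ) : Real.log (Real.sqrt (1 - ⟪spherePt z α, spherePt w β⟫ ^ 2)) =
      pairLog z w (α - β) / 2 := by
  have h := abs_real_inner_le_norm (spherePt z α) (spherePt w β)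
  rw [norm_spherePt h0 h1, norm_spherePt h0' h1', one_mul] at h
  rw [Real.log_sqrt (by rw [sub_nonneg]; exact (sq_le_one_iff_abs_le_one _).2 h), inner_spherePt,
    pairLog]

/-- Equispaced points on parallels, suitably rotated, have projective energy at most the sum of
their mean interactions (plus one) and of the energies within the parallels. -/
lemma exists_points (p N : ℕ) (r : ℕ → ℕ) (z : ℕ → ℝ) (hN : N = ∑ k ∈ Finset.range p, r k)
    (hz0 : ∀ k < p, 0 < z k) (hz1 : ∀ k < p, z k < 1) (hz : ∀ k < p, ∀ j < k, z j < z k) :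
    ∃ x : Fin N → Esp, (∀ i, ‖x i‖ = 1) ∧ (∀ i j, i ≠ j → x i ≠ x j ∧ x i ≠ -x j) ∧
      EPlog x ≤ ∑ k ∈ Finset.range p, ((r k : ℝ) ^ 2 * meanKer (z k) (z k)
        + r k * (Real.log (1 - z k ^ 2) / 2 - Real.log (r k) + 1 / (2 * (z k * r k)))
        + 2 * ∑ j ∈ Finset.range k, r j * r k * meanKer (z k) (z j)) + 1 := by
  have hC : ∀ j k, ∃ C : ℝ, 0 ≤ C ∧ (k < p → j < k → ∀ M : ℕ, 0 < M → ∀ s : ℝ,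
      -2 * M * meanKer (z k) (z j) - C ≤
      ∑ t ∈ Finset.range M, pairLog (z k) (z j) (s + 2 * π * t / M)) := by
    intro j k
    by_cases hk : k < p
    · by_cases hj : j < k
      · obtain ⟨C, hC0, hC⟩ := pairLog_average (hz0 j (hj.trans hk)) (hz k hk j hj) (hz1 k hk)
        exact ⟨C, hC0, fun _ _ => hC⟩
      · exact ⟨0, le_rfl, fun _ h => absurd h hj⟩
    · exact ⟨0, le_rfl, fun h => absurd h hk⟩
  choose C hC0 hC using hC
  obtain ⟨M, hM⟩ := exists_nat_gt
    (∑ k ∈ Finset.range p, ∑ j ∈ Finset.range k, (r j : ℝ) * r k * C j k)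
  have hM0 : (0 : ℝ) < M := lt_of_le_of_lt
    (Finset.sum_nonneg fun k _ => Finset.sum_nonneg fun j _ => by have := hC0 j k; positivity) hM
  have hM0' : 0 < M := by exact_mod_cast hM0
  obtain ⟨θ, hθ⟩ := exists_rotations
    (fun j k δ => ∑ a ∈ Finset.range (r j), ∑ b ∈ Finset.range (r k),
      -(pairLog (z k) (z j) (δ + 2 * π * b / r k - 2 * π * a / r j) / 2))
    (fun j k => r j * r k * meanKer (z k) (z j) + r j * r k * C j k / (2 * M)) hM0' p (by
      intro k hk j hj s
      rw [Finset.sum_comm]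
      have hab (a b : ℕ) : ∑ t ∈ Finset.range M, -(pairLog (z k) (z j)
          (s + 2 * π * t / M + 2 * π * b / r k - 2 * π * a / r j) / 2) ≤
          M * (meanKer (z k) (z j) + C j k / (2 * M)) := by
        have h1 := hC j k hk hj M hM0' (s + 2 * π * b / r k - 2 * π * a / r j)
        have h2 : (M : ℝ) * (meanKer (z k) (z j) + C j k / (2 * M))
          = M * meanKer (z k) (z j) + C j k / 2 := by field_simp
        rw [Finset.sum_neg_distrib, ← Finset.sum_div, h2]
        have h3 (t : ℕ) : s + 2 * π * t / M + 2 * π * b / r k - 2 * π * a / r j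
          = s + 2 * π * b / r k - 2 * π * a / r j + 2 * π * t / M := by ring
        simp_rw [h3]
        linarith
      calc _ ≤ ∑ a ∈ Finset.range (r j), ∑ b ∈ Finset.range (r k),
            (M * (meanKer (z k) (z j) + C j k / (2 * M)) : ℝ) := by
            refine Finset.sum_le_sum fun a _ => ?_
            rw [Finset.sum_comm]
            exact Finset.sum_le_sum fun b _ => hab a b
        _ = _ := by
            simp only [Finset.sum_const, Finset.card_range, nsmul_eq_mul]
            ring)
  have hcard : Fintype.card (Σ j : Fin p, Fin (r j)) = N := by
    rw [Fintype.card_sigma, hN, ← Fin.sum_univ_eq_sum_range]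
    simp
  let e := Fintype.equivFinOfCardEq hcard
  let y : (Σ j : Fin p, Fin (r j)) → Esp :=
    fun q => spherePt (z q.1) (θ q.1 + 2 * π * (q.2 : ℕ) / r q.1)
  let G : ℕ → ℕ → ℝ := fun j k => ∑ a ∈ Finset.range (r j), ∑ b ∈ Finset.range (r k),
    if j = k ∧ a = b then 0 else
      -(pairLog (z j) (z k) (θ j + 2 * π * a / r j - (θ k + 2 * π * b / r k)) / 2)
  refine ⟨fun i => y (e.symm i), fun i => norm_spherePt (hz0 _ (Fin.is_lt _)) (hz1 _ (Fin.is_lt _)) _,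
    ?_, ?_⟩
  · intro i i' hii
    change y (e.symm i) ≠ y (e.symm i') ∧ y (e.symm i) ≠ -y (e.symm i')
    have hne : e.symm i ≠ e.symm i' := fun h => hii (e.symm.injective h)
    generalize e.symm i = q at hne ⊢
    generalize e.symm i' = q' at hne ⊢
    obtain ⟨⟨j, hj⟩, ⟨a, ha⟩⟩ := q
    obtain ⟨⟨k, hk⟩, ⟨b, hb⟩⟩ := q'
    simp only at ha hb
    constructor
    · intro h
      have h3 : z j = z k := by
        have := congrArg (fun v : Esp => v 2) h
        simpa [y, spherePt] using this
      have hjk : j = k := by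
        rcases lt_trichotomy j k with h' | h' | h'
        · exact absurd h3 (hz k hk j h').ne
        · exact h'
        · exact absurd h3 (hz j hj k h').ne'
      subst hjk
      have hab : a ≠ b := by
        rintro rfl
        exact hne rfl
      have hin : ⟪y ⟨⟨j, hj⟩, ⟨a, ha⟩⟩, y ⟨⟨j, hk⟩, ⟨b, hb⟩⟩⟫ = 1 := by
        rw [h, real_inner_self_eq_norm_sq]
        simp only [y]
        rw [norm_spherePt (hz0 _ hj) (hz1 _ hj), one_pow]
      simp only [y] at hin
      have hp : 0 < 1 - z j ^ 2 := by nlinarith [hz0 j hj, hz1 j hj]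
      rw [inner_spherePt, Real.mul_self_sqrt hp.le, add_sub_add_left_eq_sub] at hin
      apply cos_ne_one hab ha hb
      have := mul_left_cancel₀ hp.ne' (a := 1 - z j ^ 2)
        (b := Real.cos (2 * π * a / r j - 2 * π * b / r j)) (c := 1) (by linarith)
      exact this
    · intro h
      have h3 : z j = -z k := by
        have := congrArg (fun v : Esp => v 2) h
        simpa [y, spherePt] using this
      linarith [hz0 j hj, hz0 k hk]
  · have hE : EPlog (fun i => y (e.symm i)) =
        ∑ j ∈ Finset.range p, ∑ k ∈ Finset.range p, G j k := by
      unfold EPlog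
      rw [← Equiv.sum_comp e]
      simp_rw [← Equiv.sum_comp e (fun i => if _ = i then _ else _)]
      simp only [Equiv.symm_apply_apply, EmbeddingLike.apply_eq_iff_eq, Fintype.sum_sigma,
        ← Fin.sum_univ_eq_sum_range, G, ← Finset.sum_neg_distrib]
      refine Finset.sum_congr rfl fun j _ => ?_
      rw [Finset.sum_comm]
      refine Finset.sum_congr rfl fun k _ => ?_
      refine Finset.sum_congr rfl fun a _ => ?_
      refine Finset.sum_congr rfl fun b _ => ?_
      have hiff : ((⟨j, a⟩ : Σ j : Fin p, Fin (r j)) = ⟨k, b⟩) ↔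
          ((j : ℕ) = k ∧ (a : ℕ) = b) := by
        constructor
        · intro h
          cases h
          exact ⟨rfl, rfl⟩
        · rintro ⟨h1, h2⟩
          obtain rfl := Fin.ext h1
          obtain rfl := Fin.ext h2
          rfl
      simp only [hiff]
      split_ifs
      · simp
      · rw [log_sqrt_spherePt (hz0 _ j.2) (hz1 _ j.2) (hz0 _ k.2) (hz1 _ k.2)]
    have hsymm : ∀ j k, G j k = G k j := by
      intro j k
      simp only [G]
      rw [Finset.sum_comm]
      refine Finset.sum_congr rfl fun b _ => Finset.sum_congr rfl fun a _ => ?_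
      rw [pairLog_symm, ← pairLog_even, neg_sub]
      simp only [eq_comm]
    have hdiag : ∀ k < p, G k k ≤ (r k : ℝ) ^ 2 * meanKer (z k) (z k)
        + r k * (Real.log (1 - z k ^ 2) / 2 - Real.log (r k) + 1 / (2 * (z k * r k))) := by
      intro k hk
      have hrow : ∀ a ∈ Finset.range (r k), (∑ b ∈ Finset.range (r k),
          if k = k ∧ a = b then 0 else
          -(pairLog (z k) (z k) (θ k + 2 * π * a / r k - (θ k + 2 * π * b / r k)) / 2)) ≤
          r k * meanKer (z k) (z k)
            + (Real.log (1 - z k ^ 2) / 2 - Real.log (r k) + 1 / (2 * (z k * r k))) := by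
        intro a ha
        have h1 := pairLog_same (hz0 k hk) (hz1 k hk) (Finset.mem_range.1 ha)
        have h2 : 1 / (z k * r k) = 2 * (1 / (2 * (z k * r k))) := by
          rw [one_div, one_div, mul_inv 2, ← mul_assoc]
          norm_num
        rw [← Finset.add_sum_erase _ _ ha]
        simp only [and_self, if_true, zero_add, true_and]
        have hs : ∀ b ∈ (Finset.range (r k)).erase a, (if a = b then 0 else
            -(pairLog (z k) (z k) (θ k + 2 * π * a / r k - (θ k + 2 * π * b / r k)) / 2)) =
            -(pairLog (z k) (z k) (2 * π * a / r k - 2 * π * b / r k) / 2) := by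
          intro b hb
          rw [if_neg (fun h => (Finset.mem_erase.1 hb).1 h.symm), add_sub_add_left_eq_sub]
        rw [Finset.sum_congr rfl hs, Finset.sum_neg_distrib, ← Finset.sum_div]
        linarith
      refine (Finset.sum_le_sum hrow).trans (le_of_eq ?_)
      simp only [Finset.sum_const, Finset.card_range, nsmul_eq_mul]
      ring
    have hoff : ∀ k < p, ∀ j < k, G j k = ∑ a ∈ Finset.range (r j), ∑ b ∈ Finset.range (r k),
        -(pairLog (z k) (z j) (θ k - θ j + 2 * π * b / r k - 2 * π * a / r j) / 2) := by
      intro k _ j hj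
      refine Finset.sum_congr rfl fun a _ => Finset.sum_congr rfl fun b _ => ?_
      rw [if_neg (fun h => hj.ne h.1), pairLog_symm, ← pairLog_even]
      congr 3
      ring
    rw [hE, sum_sum_symm G hsymm]
    have h1 : ∑ k ∈ Finset.range p, ∑ j ∈ Finset.range k, G j k ≤
        ∑ k ∈ Finset.range p, ∑ j ∈ Finset.range k, r j * r k * meanKer (z k) (z j) + 1 / 2 := by
      refine (le_of_eq ?_).trans (hθ.trans ?_)
      · exact Finset.sum_congr rfl fun k hk => Finset.sum_congr rfl fun j hj =>
          hoff k (Finset.mem_range.1 hk) j (Finset.mem_range.1 hj)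
      · simp_rw [Finset.sum_add_distrib, ← Finset.sum_div]
        have : (∑ k ∈ Finset.range p, ∑ j ∈ Finset.range k, (r j : ℝ) * r k * C j k) / (2 * M)
            ≤ 1 / 2 := by
          rw [div_le_iff₀ (by positivity)]
          linarith
        linarith
    have h2 := Finset.sum_le_sum fun k hk => hdiag k (Finset.mem_range.1 hk)
    rw [Finset.sum_add_distrib (f := fun k => G k k), Finset.sum_add_distrib (g := fun k =>
      2 * ∑ j ∈ Finset.range k, (r j : ℝ) * r k * meanKer (z k) (z j)), ← Finset.mul_sum,
      ← Finset.mul_sum]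
    linarith

/-! ### Mean energy and the midpoint rule -/

lemma nonneg_of_deriv_nonneg {f f' : ℝ → ℝ} {a : ℝ} (ha : 0 ≤ a) (hc : ContinuousOn f (Set.Icc 0 a))
    (hd : ∀ y ∈ Set.Ioo 0 a, HasDerivAt f (f' y) y) (hf : ∀ y ∈ Set.Ioo 0 a, 0 ≤ f' y)
    (h0 : f 0 = 0) : 0 ≤ f a := by
  have hm : MonotoneOn f (Set.Icc 0 a) := by
    apply monotoneOn_of_deriv_nonneg (convex_Icc 0 a) hc
    · rw [interior_Icc]
      exact fun y hy => (hd y hy).differentiableAt.differentiableWithinAt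
    · rw [interior_Icc]
      intro y hy
      rw [(hd y hy).deriv]
      exact hf y hy
  rw [← h0]
  exact hm ⟨le_rfl, ha⟩ ⟨ha, le_rfl⟩ ha

lemma log_one_add_le_cubic {y : ℝ} (hy : 0 ≤ y) : Real.log (1 + y) ≤ y - y ^ 2 / 2 + y ^ 3 / 3 := by
  have hd : ∀ t : ℝ, 0 ≤ t → HasDerivAt (fun t : ℝ => t - t ^ 2 / 2 + t ^ 3 / 3 - Real.log (1 + t))
      (1 - t + t ^ 2 - 1 / (1 + t)) t := by
    intro t ht
    have h1 := ((hasDerivAt_id' t).const_add 1).log (by positivity)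
    have h2 := (((hasDerivAt_id' t).sub ((hasDerivAt_pow 2 t).div_const 2)).add
      ((hasDerivAt_pow 3 t).div_const 3)).sub h1
    refine h2.congr_deriv ?_
    norm_num
  have := nonneg_of_deriv_nonneg hy (fun t ht => (hd t ht.1).continuousAt.continuousWithinAt)
    (fun t ht => hd t ht.1.le) (fun t ht => ?_) (by simp)
  · linarith
  · have ht0 := ht.1
    have : 1 - t + t ^ 2 - 1 / (1 + t) = t ^ 3 / (1 + t) := by field_simp; ring
    rw [this]
    positivity

lemma log_one_sub_le_cubic {y : ℝ} (hy : 0 ≤ y) (hy1 : y < 1) :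
    Real.log (1 - y) ≤ -y - y ^ 2 / 2 - y ^ 3 / 3 := by
  have hd : ∀ t : ℝ, 0 ≤ t → t < 1 →
      HasDerivAt (fun t : ℝ => -t - t ^ 2 / 2 - t ^ 3 / 3 - Real.log (1 - t))
      (-1 - t - t ^ 2 + 1 / (1 - t)) t := by
    intro t ht ht1
    have h1 := ((hasDerivAt_id' t).const_sub 1).log (by linarith)
    have h2 := (((hasDerivAt_id' t).neg.sub ((hasDerivAt_pow 2 t).div_const 2)).sub
      ((hasDerivAt_pow 3 t).div_const 3)).sub h1
    refine h2.congr_deriv ?_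
    norm_num
    ring
  have := nonneg_of_deriv_nonneg hy
    (fun t ht => (hd t ht.1 (ht.2.trans_lt hy1)).continuousAt.continuousWithinAt)
    (fun t ht => hd t ht.1.le (ht.2.trans hy1)) (fun t ht => ?_) (by simp)
  · linarith
  · have ht0 := ht.1
    have ht1 : 0 < 1 - t := by linarith [ht.2]
    have : -1 - t - t ^ 2 + 1 / (1 - t) = t ^ 3 / (1 - t) := by field_simp; ring
    rw [this]
    positivity

/-- Integrated form of `(1+s) log (1+s) + (1-s) log (1-s) ≤ s² + 2s⁴/3`, valid up to `y = 1`. -/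
lemma entropy_window_le {y : ℝ} (hy : 0 ≤ y) (hy1 : y ≤ 1) :
    ((1 + y) ^ 2 * Real.log (1 + y) - (1 - y) ^ 2 * Real.log (1 - y)) / 2 - y ≤
      y ^ 3 / 3 + 2 * y ^ 5 / 15 := by
  have hcl : Continuous fun t : ℝ => (1 - t) * ((1 - t) * Real.log (1 - t)) :=
    (continuous_const.sub continuous_id).mul
      (Real.continuous_mul_log.comp (continuous_const.sub continuous_id))
  have hcl' : Continuous fun t : ℝ => (1 + t) * ((1 + t) * Real.log (1 + t)) :=
    (continuous_const.add continuous_id).mul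
      (Real.continuous_mul_log.comp (continuous_const.add continuous_id))
  let f : ℝ → ℝ := fun t => t ^ 3 / 3 + 2 * t ^ 5 / 15
    - (((1 + t) * ((1 + t) * Real.log (1 + t)) - (1 - t) * ((1 - t) * Real.log (1 - t))) / 2 - t)
  have hd : ∀ t : ℝ, 0 < t → t < 1 → HasDerivAt f (t ^ 2 + 2 * t ^ 4 / 3
      - ((1 + t) * Real.log (1 + t) + (1 - t) * Real.log (1 - t))) t := by
    intro t ht ht1
    have e1 := (hasDerivAt_id' t).const_add 1
    have e2 := (hasDerivAt_id' t).const_sub 1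
    have p1 : 1 + t ≠ 0 := by linarith
    have p2 : 1 - t ≠ 0 := by linarith
    have h1 := e1.mul (e1.mul (e1.log p1))
    have h2 := e2.mul (e2.mul (e2.log p2))
    have h3 := (((hasDerivAt_pow 3 t).div_const 3).add
      (((hasDerivAt_pow 5 t).const_mul 2).div_const 15)).sub
      (((h1.sub h2).div_const 2).sub (hasDerivAt_id' t))
    refine h3.congr_deriv ?_
    simp only [Pi.mul_apply]
    field_simp
    push_cast
    ring
  have := nonneg_of_deriv_nonneg (f := f) hy (by fun_prop)
    (fun t ht => hd t ht.1 (ht.2.trans_le hy1)) (fun t ht => ?_) (by simp [f])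
  · simp only [f] at this
    linarith
  · have ht0 := ht.1
    have ht1 : 0 < 1 - t := by linarith [ht.2]
    have a1 := mul_le_mul_of_nonneg_left (log_one_add_le_cubic ht0.le) (show 0 ≤ 1 + t by linarith)
    have a2 := mul_le_mul_of_nonneg_left (log_one_sub_le_cubic ht0.le (by linarith)) ht1.le
    nlinarith

lemma sq_log_window_le {x δ : ℝ} (hx : 0 < x) (hδ : 0 ≤ δ) (hδx : δ ≤ x) :
    ((x + δ) ^ 2 * Real.log (x + δ) - (x - δ) ^ 2 * Real.log (x - δ)) / 2 ≤
      2 * δ * (x * Real.log x) + x * δ + δ ^ 3 / (3 * x) * (1 + 2 / 5 * (δ / x) ^ 2) := by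
  have h := entropy_window_le (y := δ / x) (by positivity) ((div_le_one hx).2 hδx)
  have e1 : x + δ = x * (1 + δ / x) := by field_simp
  have e2 : x - δ = x * (1 - δ / x) := by field_simp
  have l1 : Real.log (x + δ) = Real.log x + Real.log (1 + δ / x) := by
    rw [e1, Real.log_mul hx.ne' (by positivity)]
  have l2 : (1 - δ / x) ^ 2 * Real.log (x - δ)
      = (1 - δ / x) ^ 2 * (Real.log x + Real.log (1 - δ / x)) := by
    by_cases h0 : 1 - δ / x = 0
    · simp [h0]
    · rw [e2, Real.log_mul hx.ne' h0]
  have h2 : (x - δ) ^ 2 * Real.log (x - δ) = x ^ 2 * ((1 - δ / x) ^ 2 *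
      (Real.log x + Real.log (1 - δ / x))) := by
    rw [← l2, ← mul_assoc, ← mul_pow, ← e2]
  have h1 : (x + δ) ^ 2 * Real.log (x + δ) = x ^ 2 * ((1 + δ / x) ^ 2 *
      (Real.log x + Real.log (1 + δ / x))) := by
    rw [← l1, ← mul_assoc, ← mul_pow, ← e1]
  rw [h1, h2]
  have h3 := mul_le_mul_of_nonneg_left h (sq_nonneg x)
  have e3 : δ = x * (δ / x) := by field_simp
  have e4 : δ ^ 3 / (3 * x) = x ^ 2 * (δ / x) ^ 3 / 3 := by field_simp
  rw [e4]
  have e5 : 2 * δ * (x * Real.log x) = 2 * (x * (δ / x)) * (x * Real.log x) := by rw [← e3]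
  have e6 : x * δ = x * (x * (δ / x)) := by rw [← e3]
  rw [e5, e6]
  nlinarith

/-- The density whose midpoint sums compute the mean energy of a family of parallels. -/
def phi (z : ℝ) : ℝ :=
  ((1 + z) * Real.log (1 + z) + (1 - z) * Real.log (1 - z)) / 2

/-- A primitive of `phi`. -/
def Phi (z : ℝ) : ℝ :=
  ((1 + z) ^ 2 * Real.log (1 + z) - (1 - z) ^ 2 * Real.log (1 - z)) / 4 - z / 2

/-- Error of the midpoint rule for `phi`; the leading term is `(2δ)³ phi''(c) / 24`. -/
lemma midpoint_error {c δ : ℝ} (hc : 0 ≤ c) (hδ : 0 < δ) (hcδ : c + δ ≤ 1) :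
    Phi (c + δ) - Phi (c - δ) - 2 * δ * phi c ≤
      δ ^ 3 / (3 * (1 - c ^ 2)) * (1 + 2 / 5 * (δ / (1 - c)) ^ 2) := by
  have h1 := sq_log_window_le (x := 1 + c) (δ := δ) (by linarith) hδ.le (by linarith)
  have h2 := sq_log_window_le (x := 1 - c) (δ := δ) (by linarith) hδ.le (by linarith)
  have hm : 0 < 1 - c := by linarith
  have h3 : δ ^ 3 / (3 * (1 + c)) * (1 + 2 / 5 * (δ / (1 + c)) ^ 2) ≤
      δ ^ 3 / (3 * (1 + c)) * (1 + 2 / 5 * (δ / (1 - c)) ^ 2) := by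
    gcongr
    linarith
  have h4 : δ ^ 3 / (3 * (1 - c ^ 2)) * (1 + 2 / 5 * (δ / (1 - c)) ^ 2)
      = (δ ^ 3 / (3 * (1 + c)) * (1 + 2 / 5 * (δ / (1 - c)) ^ 2)
        + δ ^ 3 / (3 * (1 - c)) * (1 + 2 / 5 * (δ / (1 - c)) ^ 2)) / 2 := by
    rw [show 1 - c ^ 2 = (1 + c) * (1 - c) by ring]
    field_simp
    ring
  rw [h4]
  unfold Phi phi
  rw [show 1 + (c + δ) = 1 + c + δ by ring, show 1 + (c - δ) = 1 + c - δ by ring,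
    show 1 - (c + δ) = 1 - c - δ by ring, show 1 - (c - δ) = 1 - c + δ by ring]
  linarith

/-- Abel summation for the kernel `meanKer`, which is the sum of a function of the larger height
and of a function of the smaller one. -/
lemma sum_meanKer (r z : ℕ → ℝ) (p : ℕ) :
    ∑ k ∈ Finset.range p, (r k ^ 2 * meanKer (z k) (z k)
        + 2 * ∑ j ∈ Finset.range k, r j * r k * meanKer (z k) (z j)) =
      Real.log 2 * (∑ k ∈ Finset.range p, r k) ^ 2
      - ∑ k ∈ Finset.range p,
        (Real.log (1 + z k) * (r k ^ 2 + 2 * r k * ∑ j ∈ Finset.range k, r j)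
        + Real.log (1 - z k ^ 2) / 2 * (r k * (r k
          + 2 * (∑ j ∈ Finset.range p, r j - ∑ j ∈ Finset.range k, r j - r k)))) := by
  induction p with
  | zero => simp
  | succ n ih =>
    rw [Finset.sum_range_succ, ih, Finset.sum_range_succ (fun k => Real.log (1 + z k) * _ + _)]
    simp only [meanKer, Finset.sum_range_succ r n]
    have h1 : ∑ j ∈ Finset.range n,
        r j * r n * (Real.log 2 - Real.log (1 + z n) - Real.log (1 - z j ^ 2) / 2)
        = (∑ j ∈ Finset.range n, r j) * (r n * (Real.log 2 - Real.log (1 + z n)))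
          - r n * ∑ j ∈ Finset.range n, r j * (Real.log (1 - z j ^ 2) / 2) := by
      rw [Finset.sum_mul, Finset.mul_sum, ← Finset.sum_sub_distrib]
      exact Finset.sum_congr rfl fun j _ => by ring
    have h2 : ∑ k ∈ Finset.range n,
        (Real.log (1 + z k) * (r k ^ 2 + 2 * r k * ∑ j ∈ Finset.range k, r j)
        + Real.log (1 - z k ^ 2) / 2 * (r k * (r k
          + 2 * (∑ j ∈ Finset.range n, r j + r n - ∑ j ∈ Finset.range k, r j - r k)))) =
        ∑ k ∈ Finset.range n,
        (Real.log (1 + z k) * (r k ^ 2 + 2 * r k * ∑ j ∈ Finset.range k, r j)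
        + Real.log (1 - z k ^ 2) / 2 * (r k * (r k
          + 2 * (∑ j ∈ Finset.range n, r j - ∑ j ∈ Finset.range k, r j - r k))))
        + 2 * r n * ∑ j ∈ Finset.range n, r j * (Real.log (1 - z j ^ 2) / 2) := by
      rw [Finset.mul_sum, ← Finset.sum_add_distrib]
      exact Finset.sum_congr rfl fun j _ => by ring
    rw [h1, h2]
    ring

/-- Mean energy of the family of parallels carrying `r k` points at the midpoints of consecutive
intervals of lengths `r k / N`. -/
lemma mean_energy_le (r S z : ℕ → ℝ) (p : ℕ) {N : ℝ} (hN : 0 < N)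
    (hS : ∀ k, S k = ∑ j ∈ Finset.range k, r j) (hSp : S p = N)
    (hr : ∀ k < p, 0 < r k) (hS0 : ∀ k < p, 0 ≤ S k) (hS1 : ∀ k < p, S k + r k ≤ N)
    (hz : ∀ k, z k = (S k + r k / 2) / N) :
    ∑ k ∈ Finset.range p, (r k ^ 2 * meanKer (z k) (z k)
        + 2 * ∑ j ∈ Finset.range k, r j * r k * meanKer (z k) (z j)) ≤
      N ^ 2 * (1 - Real.log 2) + ∑ k ∈ Finset.range p,
        r k * (r k ^ 2 / (6 * N * (1 - z k ^ 2)) / 2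
          * (1 + 2 / 5 * (r k / (2 * N) / (1 - z k)) ^ 2)) := by
  have hb : ∀ k < p, 0 < z k ∧ z k + r k / (2 * N) ≤ 1 ∧ z k < 1 := by
    intro k hk
    have h1 := hr k hk
    have h2 := hS0 k hk
    have h3 := hS1 k hk
    refine ⟨by rw [hz]; positivity, ?_, ?_⟩
    · rw [hz, show (S k + r k / 2) / N + r k / (2 * N) = (S k + r k) / N by field_simp; ring]
      exact (div_le_one hN).2 h3
    · rw [hz, div_lt_one hN]
      linarith
  have htel : ∑ k ∈ Finset.range p, (Phi (S (k + 1) / N) - Phi (S k / N)) = Real.log 2 - 1 / 2 := by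
    rw [Finset.sum_range_sub (fun k => Phi (S k / N)), hSp, hS 0, div_self hN.ne']
    norm_num [Phi]
  have hk : ∀ k ∈ Finset.range p, Phi (S (k + 1) / N) - Phi (S k / N) ≤
      r k / N * phi (z k) + r k * (r k ^ 2 / (6 * N * (1 - z k ^ 2)) / 2
          * (1 + 2 / 5 * (r k / (2 * N) / (1 - z k)) ^ 2)) / (2 * N ^ 2) := by
    intro k hk
    obtain ⟨h1, h2, h3⟩ := hb k (Finset.mem_range.1 hk)
    have h4 := hr k (Finset.mem_range.1 hk)
    have h := midpoint_error (c := z k) (δ := r k / (2 * N)) h1.le (by positivity) h2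
    have e1 : z k + r k / (2 * N) = S (k + 1) / N := by
      rw [hz, hS (k + 1), Finset.sum_range_succ, ← hS]
      field_simp
      ring
    have e2 : z k - r k / (2 * N) = S k / N := by
      rw [hz]
      field_simp
      ring
    have hzz : 0 < 1 - z k ^ 2 := by nlinarith
    have e3 : (r k / (2 * N)) ^ 3 / (3 * (1 - z k ^ 2)) =
        r k * (r k ^ 2 / (6 * N * (1 - z k ^ 2)) / 2) / (2 * N ^ 2) := by
      field_simp
      ring
    have e4 : 2 * (r k / (2 * N)) = r k / N := by field_simp
    rw [e1, e2, e3, e4] at h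
    rw [← mul_assoc, mul_div_right_comm]
    linarith
  have hsum := Finset.sum_le_sum hk
  rw [htel, Finset.sum_add_distrib, ← Finset.sum_div] at hsum
  rw [sum_meanKer]
  have hphi : ∑ k ∈ Finset.range p,
        (Real.log (1 + z k) * (r k ^ 2 + 2 * r k * ∑ j ∈ Finset.range k, r j)
        + Real.log (1 - z k ^ 2) / 2 * (r k * (r k
          + 2 * (∑ j ∈ Finset.range p, r j - ∑ j ∈ Finset.range k, r j - r k)))) =
      2 * N ^ 2 * ∑ k ∈ Finset.range p, r k / N * phi (z k) := by
    rw [Finset.mul_sum]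
    refine Finset.sum_congr rfl fun k hk => ?_
    obtain ⟨h1, h2, h3⟩ := hb k (Finset.mem_range.1 hk)
    rw [← hS, ← hS, hSp, show 1 - z k ^ 2 = (1 - z k) * (1 + z k) by ring,
      Real.log_mul (by linarith) (by linarith), phi]
    have e : S k = N * z k - r k / 2 := by rw [hz]; field_simp; ring
    rw [e]
    field_simp
    ring
  rw [hphi, ← hS, hSp]
  have := mul_le_mul_of_nonneg_left hsum (show 0 ≤ 2 * N ^ 2 by positivity)
  rw [mul_add, mul_div_cancel₀ _ (by positivity)] at this
  linarith

/-! ### Contribution of a single band -/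

/-- Excess of the contribution of a band of `r` points at height `c` over its optimal value;
`r ^ 2 / (6 * N * (1 - c ^ 2))` is the squared ratio between `r` and the optimal band size. -/
def excess (N c r : ℝ) : ℝ :=
  r ^ 2 / (6 * N * (1 - c ^ 2)) / 2 * (1 + 2 / 5 * (r / (2 * N) / (1 - c)) ^ 2)
    - Real.log (r ^ 2 / (6 * N * (1 - c ^ 2))) / 2 - 1 / 2 + 1 / (2 * (c * r))

/-- Bound for all bands, including those near the pole and the equator. -/
lemma excess_le_ten {N S r c : ℝ} (hN : 0 < N) (hS : 0 ≤ S) (hr : 1 ≤ r) (hSr : S + r ≤ N)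
    (h1 : r ^ 2 ≤ 6 * N * (1 - (S / N) ^ 2)) (h2 : N * (1 - (S / N) ^ 2) / 2 ≤ r ^ 2)
    (hc : c = (S + r / 2) / N) : excess N c r ≤ 10 := by
  set Z := S / N with hZ
  set δ := r / (2 * N) with hδ
  have hr0 : 0 < r := by linarith
  have hZ0 : 0 ≤ Z := by positivity
  have hcδ : c = Z + δ := by rw [hc, hZ, hδ]; field_simp
  have hδ0 : 0 < δ := by positivity
  have hZδ : Z + 2 * δ ≤ 1 := by
    rw [show Z + 2 * δ = (S + r) / N by rw [hZ, hδ]; field_simp]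
    exact (div_le_one hN).2 hSr
  have hc1 : 0 < 1 - c := by linarith
  have hcc : 0 < 1 - c ^ 2 := by nlinarith
  have hw1 : r ^ 2 / (6 * N * (1 - c ^ 2)) ≤ 2 := by
    rw [div_le_iff₀ (by positivity)]
    refine h1.trans ?_
    have : 1 - Z ^ 2 ≤ 2 * (1 - c ^ 2) := by nlinarith
    nlinarith
  have hw2 : 1 / 12 ≤ r ^ 2 / (6 * N * (1 - c ^ 2)) := by
    rw [le_div_iff₀ (by positivity)]
    refine le_trans ?_ h2
    have : 1 - c ^ 2 ≤ 1 - Z ^ 2 := by nlinarith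
    nlinarith
  have hy1 : δ / (1 - c) ≤ 1 := (div_le_one hc1).2 (by linarith)
  have hy0 : 0 ≤ δ / (1 - c) := by positivity
  have hcr : 3 / 16 ≤ c * r := by
    have e : c * r = Z * r + r ^ 2 / (2 * N) := by rw [hcδ, hδ]; field_simp
    have h3 : (1 - Z ^ 2) / 4 ≤ r ^ 2 / (2 * N) := by
      rw [le_div_iff₀ (by positivity)]
      linarith
    rw [e]
    nlinarith
  have h4 : 1 / (2 * (c * r)) ≤ 8 / 3 := by
    rw [div_le_iff₀ (by linarith)]
    linarith
  unfold excess
  rw [← hδ]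
  set w := r ^ 2 / (6 * N * (1 - c ^ 2))
  have hw0 : 0 < w := by linarith
  have h5 := Real.one_sub_inv_le_log_of_pos hw0
  have h6 : w⁻¹ ≤ 12 := by
    rw [inv_le_comm₀ hw0 (by norm_num)]
    linarith
  have h7 : w / 2 * (1 + 2 / 5 * (δ / (1 - c)) ^ 2) ≤ 1 * (1 + 2 / 5 * 1) := by
    gcongr
    · linarith
    · exact pow_le_one₀ hy0 hy1
  linarith

/-- A band whose squared size is `w` times the optimal one costs little when `w` is close to `1`,
as `w - log w - 1` vanishes to second order there. -/
lemma near_optimal_cost_le {w y θ : ℝ} (hθ : 0 < θ) (hθ1 : θ ≤ 1 / 10) (hw2 : 1 - 2 * θ ≤ w)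
    (hw1 : w ≤ 1 + 2 * θ) (hy0 : 0 ≤ y) (hy1 : y ≤ 2 * θ) :
    w / 2 * (1 + 2 / 5 * y ^ 2) - Real.log w / 2 - 1 / 2 ≤ θ := by
  have hw0 : 0 < w := by linarith
  have h5 := Real.one_sub_inv_le_log_of_pos hw0
  have h6 : w + w⁻¹ - 2 ≤ θ / 2 := by
    have e : w + w⁻¹ - 2 = (w - 1) ^ 2 / w := by field_simp; ring
    have h8 : (w - 1) ^ 2 ≤ (2 * θ) ^ 2 := sq_le_sq' (by linarith) (by linarith)
    have h9 : θ / 2 * (8 / 10) ≤ θ / 2 * w := by gcongr; linarith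
    rw [e, div_le_iff₀ hw0]
    nlinarith
  have h7 : w * y ^ 2 ≤ 6 / 5 * (2 * θ) ^ 2 := by
    gcongr
    linarith
  nlinarith

set_option maxHeartbeats 1000000 in
/-- Bound for the bands away from the pole and from the equator, when `N` is large. -/
lemma excess_le_small {N S r c θ : ℝ} (hN : 0 < N) (hθ : 0 < θ) (hθ1 : θ ≤ 1 / 10)
    (hNθ : 3 ≤ N * θ ^ 5) (hS : θ * N ≤ S) (hS' : S ≤ N - θ * N) (hr : 1 ≤ r)
    (hSr : S + r ≤ N)
    (h1 : r ^ 2 ≤ 6 * N * (1 - (S / N) ^ 2)) (h2 : √(6 * N * (1 - (S / N) ^ 2)) - 1 ≤ r)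
    (hc : c = (S + r / 2) / N) : excess N c r ≤ 2 * θ := by
  set Z := S / N with hZ
  set δ := r / (2 * N) with hδ
  have hr0 : 0 < r := by linarith
  have hZθ : θ ≤ Z := (le_div_iff₀ hN).2 hS
  have hZθ' : Z ≤ 1 - θ := (div_le_iff₀ hN).2 (by linarith)
  have hcδ : c = Z + δ := by rw [hc, hZ, hδ]; field_simp
  have hδ0 : 0 < δ := by positivity
  have hZδ : Z + 2 * δ ≤ 1 := by
    rw [show Z + 2 * δ = (S + r) / N by rw [hZ, hδ]; field_simp]
    exact (div_le_one hN).2 hSr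
  have hc1 : 0 < 1 - c := by linarith
  have hcc : 0 < 1 - c ^ 2 := by nlinarith
  have hZZ : θ ≤ 1 - Z ^ 2 := by nlinarith
  set X := √(6 * N * (1 - Z ^ 2)) with hX
  have hX2 : X ^ 2 = 6 * N * (1 - Z ^ 2) :=
    Real.sq_sqrt (mul_nonneg (by positivity) (by linarith))
  have hX0 : 0 < X := Real.sqrt_pos.2 (mul_pos (by positivity) (by linarith))
  have hXθ : 1 ≤ X * θ ^ 2 := by
    have h3 : 1 ≤ (X * θ ^ 2) ^ 2 := by
      rw [mul_pow, hX2]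
      have : N * θ * θ ^ 4 ≤ N * (1 - Z ^ 2) * θ ^ 4 := by gcongr
      nlinarith
    have h4 : 0 ≤ X * θ ^ 2 := by positivity
    nlinarith
  have hXθ' : 1 ≤ X * θ := by nlinarith [mul_pos hX0 hθ]
  have hrX : X * (1 - θ) ≤ r := by linarith
  -- the height varies by a small fraction of the distance to the pole within the band
  have hδθ : δ ≤ θ * (1 - Z) := by
    have h3 : δ ^ 2 ≤ (θ * (1 - Z)) ^ 2 := by
      have e : δ ^ 2 = r ^ 2 / (4 * N ^ 2) := by rw [hδ]; ring
      rw [e, div_le_iff₀ (by positivity)]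
      refine h1.trans ?_
      have h5 : 3 ≤ N * θ ^ 2 * (1 - Z) := by
        have : N * θ ^ 2 * θ ≤ N * θ ^ 2 * (1 - Z) := by gcongr; linarith
        have h7 : θ ^ 2 ≤ 1 := pow_le_one₀ hθ.le (by linarith)
        have : N * θ ^ 3 * θ ^ 2 ≤ N * θ ^ 3 * 1 := by gcongr
        nlinarith
      have h6 : 6 * (1 + Z) ≤ 4 * (N * θ ^ 2 * (1 - Z)) := by nlinarith
      have h8 := mul_le_mul_of_nonneg_left h6 (show 0 ≤ N * (1 - Z) from
        mul_nonneg hN.le (by linarith))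
      nlinarith
    exact (pow_le_pow_iff_left₀ hδ0.le (mul_nonneg hθ.le (by linarith)) two_ne_zero).1 h3
  have hZc : Z ≤ c := by linarith
  have hc0 : 0 < c := by linarith
  have hy0 : 0 ≤ δ / (1 - c) := by positivity
  have hy1 : δ / (1 - c) ≤ 2 * θ := by
    rw [div_le_iff₀ hc1, hcδ]
    nlinarith
  have hcr : 1 / (2 * (c * r)) ≤ θ := by
    have h3 : θ * (X * (1 - θ)) ≤ c * r :=
      mul_le_mul (hZθ.trans hZc) hrX (mul_nonneg hX0.le (by linarith)) hc0.le
    have h4 := mul_le_mul_of_nonneg_left h3 hθ.le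
    have h5 := mul_le_mul_of_nonneg_right hXθ (show 0 ≤ 1 - θ by linarith)
    rw [div_le_iff₀ (by positivity)]
    linarith
  have hw1 : r ^ 2 / (6 * N * (1 - c ^ 2)) ≤ 1 + 2 * θ := by
    rw [div_le_iff₀ (by positivity)]
    refine h1.trans ?_
    have h3 : (1 - Z ^ 2) * (1 - θ) ≤ 1 - c ^ 2 := by
      have : (1 - Z) * (1 - θ) ≤ 1 - c := by linarith
      have h4 : (1 - Z) * (1 - θ) * (1 + Z) ≤ (1 - c) * (1 + c) :=
        mul_le_mul this (by linarith) (by linarith) hc1.le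
      linarith
    have h4 : (1 - Z ^ 2) ≤ (1 + 2 * θ) * (1 - c ^ 2) := by
      have := mul_le_mul_of_nonneg_left h3 (show 0 ≤ 1 + 2 * θ by linarith)
      have h6 : 0 ≤ θ * (1 - 2 * θ) * (1 - Z ^ 2) :=
        mul_nonneg (mul_nonneg hθ.le (by linarith)) (by linarith)
      linarith
    have := mul_le_mul_of_nonneg_left h4 (show 0 ≤ 6 * N by positivity)
    linarith
  have hw2 : 1 - 2 * θ ≤ r ^ 2 / (6 * N * (1 - c ^ 2)) := by
    rw [le_div_iff₀ (by positivity)]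
    have h3 : (X * (1 - θ)) ^ 2 ≤ r ^ 2 :=
      pow_le_pow_left₀ (mul_nonneg hX0.le (by linarith)) hrX 2
    refine le_trans ?_ h3
    rw [mul_pow, hX2]
    have h4 : 1 - c ^ 2 ≤ 1 - Z ^ 2 := by nlinarith
    have h5 : 1 - 2 * θ ≤ (1 - θ) ^ 2 := by linarith [sq_nonneg θ]
    rw [mul_comm]
    exact mul_le_mul (by gcongr) h5 (by linarith) (by rw [← hX2]; positivity)
  have := near_optimal_cost_le hθ hθ1 hw2 hw1 hy0 hy1
  unfold excess
  linarith

/-! ### The bands -/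

/-- Number of points of the band starting after `S` of the `N` points: about
`√(6 N (1 - (S / N) ^ 2))`, the value that minimises the leading cost of the band. -/
def bandSize (N S : ℕ) : ℕ :=
  min (N - S) ⌊√(6 * N * (1 - ((S : ℝ) / N) ^ 2))⌋₊

/-- Number of points in the first `k` bands. -/
def cumSize (N : ℕ) : ℕ → ℕ
  | 0 => 0
  | k + 1 => cumSize N k + bandSize N (cumSize N k)

lemma bandSize_spec {N S : ℕ} (hS : S < N) :
    1 ≤ bandSize N S ∧ S + bandSize N S ≤ N ∧
    (bandSize N S : ℝ) ^ 2 ≤ 6 * N * (1 - ((S : ℝ) / N) ^ 2) ∧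
    N * (1 - ((S : ℝ) / N) ^ 2) / 2 ≤ (bandSize N S : ℝ) ^ 2 ∧
    ((12 : ℝ) ≤ N - S → √(6 * N * (1 - ((S : ℝ) / N) ^ 2)) - 1 ≤ bandSize N S) := by
  have hN : (0 : ℝ) < N := by exact_mod_cast (by omega : 0 < N)
  have hS0 : (0 : ℝ) ≤ S := Nat.cast_nonneg S
  have hu : ((N - S : ℕ) : ℝ) = N - S := Nat.cast_sub hS.le
  have hu1 : (1 : ℝ) ≤ N - S := by
    rw [← hu]
    exact_mod_cast (by omega : 1 ≤ N - S)
  have hlow : 6 * ((N : ℝ) - S) ≤ 6 * N * (1 - ((S : ℝ) / N) ^ 2) := by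
    have e : 6 * (N : ℝ) * (1 - ((S : ℝ) / N) ^ 2)
      = 6 * (N - S) + 6 * (N - S) * (S / N) := by field_simp; ring
    rw [e]
    have : 0 ≤ 6 * ((N : ℝ) - S) * (S / N) := mul_nonneg (by linarith) (by positivity)
    linarith
  have hupp : 6 * (N : ℝ) * (1 - ((S : ℝ) / N) ^ 2) ≤ 12 * (N - S) := by
    have e : 6 * (N : ℝ) * (1 - ((S : ℝ) / N) ^ 2)
      = 12 * (N - S) - 6 * (N - S) * ((N - S) / N) := by field_simp; ring
    rw [e]
    have : 0 ≤ 6 * ((N : ℝ) - S) * ((N - S) / N) :=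
      mul_nonneg (by linarith) (div_nonneg (by linarith) hN.le)
    linarith
  unfold bandSize
  set X := √(6 * N * (1 - ((S : ℝ) / N) ^ 2)) with hX
  have hX2 : X ^ 2 = 6 * N * (1 - ((S : ℝ) / N) ^ 2) := Real.sq_sqrt (by linarith)
  have hX0 : 0 ≤ X := Real.sqrt_nonneg _
  have hXge : 2 ≤ X := by nlinarith
  have hfl : (⌊X⌋₊ : ℝ) ≤ X := Nat.floor_le hX0
  have hfl' : X < ⌊X⌋₊ + 1 := Nat.lt_floor_add_one X
  have hf1 : 1 ≤ ⌊X⌋₊ := Nat.le_floor (by push_cast; linarith)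
  refine ⟨le_min (by omega) hf1, ?_, ?_, ?_, ?_⟩
  · have := min_le_left (N - S) ⌊X⌋₊
    omega
  · rw [← hX2]
    have : ((min (N - S) ⌊X⌋₊ : ℕ) : ℝ) ≤ X :=
      le_trans (by exact_mod_cast min_le_right _ _) hfl
    gcongr
  · rcases min_choice (N - S) ⌊X⌋₊ with h | h
    · rw [h, hu]
      nlinarith
    · rw [h]
      nlinarith
  · intro h12
    rcases min_choice (N - S) ⌊X⌋₊ with h | h
    · rw [h, hu]
      nlinarith
    · rw [h]
      linarith

lemma cumSize_le (N k : ℕ) : cumSize N k ≤ N := by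
  induction k with
  | zero => simp [cumSize]
  | succ k ih =>
    have : bandSize N (cumSize N k) ≤ N - cumSize N k := min_le_left _ _
    simp only [cumSize]
    omega

lemma exists_cumSize_eq (N : ℕ) : ∃ p, cumSize N p = N ∧ ∀ k < p, cumSize N k < N := by
  have h : ∀ k, min k N ≤ cumSize N k := by
    intro k
    induction k with
    | zero => simp
    | succ k ih =>
      rcases (cumSize_le N k).lt_or_eq with h | h
      · have := (bandSize_spec h).1
        simp only [cumSize]
        omega
      · simp only [cumSize]
        omega
  have hex : ∃ p, cumSize N p = N := ⟨N, le_antisymm (cumSize_le N N) (by simpa using h N)⟩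
  exact ⟨Nat.find hex, Nat.find_spec hex, fun k hk =>
    lt_of_le_of_ne (cumSize_le N k) (Nat.find_min hex hk)⟩

/-- Few points lie in the bands that start below a threshold `a`. -/
lemma sum_ite_lt_le (r S : ℕ → ℝ) (hS : ∀ k, S (k + 1) = S k + r k) (hS0 : S 0 = 0) {a R : ℝ}
    (haR : 0 ≤ a + R) (p : ℕ) (hr0 : ∀ k < p, 0 ≤ r k) (hr : ∀ k < p, r k ≤ R) :
    ∑ k ∈ Finset.range p, (if S k < a then r k else 0) ≤ a + R := by
  suffices h : ∑ k ∈ Finset.range p, (if S k < a then r k else 0) ≤ min (S p) (a + R) from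
    h.trans (min_le_right _ _)
  induction p with
  | zero => simp [hS0, haR]
  | succ p ih =>
    have ih := ih (fun k hk => hr0 k (by omega)) (fun k hk => hr k (by omega))
    have h1 := hr0 p (by omega)
    have h2 := hr p (by omega)
    have h3 := min_le_left (S p) (a + R)
    have h4 := min_le_right (S p) (a + R)
    rw [Finset.sum_range_succ, hS]
    split_ifs with h
    · exact le_min (by linarith) (by linarith)
    · exact le_min (by linarith) (by linarith)

/-- Few points lie in the bands that start above a threshold `b`. -/
lemma sum_ite_gt_le (r S : ℕ → ℝ) (hS : ∀ k, S (k + 1) = S k + r k) {b : ℝ}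
    (p : ℕ) (hr0 : ∀ k < p, 0 ≤ r k) :
    ∑ k ∈ Finset.range p, (if b < S k then r k else 0) ≤ max 0 (S p - b) := by
  induction p with
  | zero => simp
  | succ p ih =>
    have ih := ih (fun k hk => hr0 k (by omega))
    have h1 := hr0 p (by omega)
    rw [Finset.sum_range_succ, hS]
    split_ifs with h
    · rw [max_eq_right (by linarith)] at ih
      exact le_max_of_le_right (by linarith)
    · rw [max_eq_left (by linarith)] at ih
      exact le_max_of_le_left (by linarith)

/-- For every `N` there is a configuration whose projective energy is the expected expansion plus
the sum of the excesses of the bands. -/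
lemma exists_points_bands (N : ℕ) (hN : 0 < N) : ∃ x : Fin N → Esp, ∃ p : ℕ,
    cumSize N p = N ∧ (∀ k < p, cumSize N k < N) ∧
    (∀ i, ‖x i‖ = 1) ∧ (∀ i j, i ≠ j → x i ≠ x j ∧ x i ≠ -x j) ∧
    EPlog x ≤ (N : ℝ) ^ 2 * (1 - Real.log 2) + N * (1 / 2 - Real.log (6 * N) / 2) + 1
      + ∑ k ∈ Finset.range p, (bandSize N (cumSize N k) : ℝ)
        * excess N (((cumSize N k : ℝ) + (bandSize N (cumSize N k) : ℝ) / 2) / N)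
          (bandSize N (cumSize N k)) := by
  obtain ⟨p, hp, hlt⟩ := exists_cumSize_eq N
  have hN' : (0 : ℝ) < N := by exact_mod_cast hN
  have hcum : ∀ k, cumSize N k = ∑ j ∈ Finset.range k, bandSize N (cumSize N j) := by
    intro k
    induction k with
    | zero => simp [cumSize]
    | succ k ih => rw [Finset.sum_range_succ, ← ih, cumSize]
  set r : ℕ → ℕ := fun k => bandSize N (cumSize N k) with hr
  set z : ℕ → ℝ := fun k => ((cumSize N k : ℝ) + (r k : ℝ) / 2) / N with hz
  have hr1 : ∀ k < p, 1 ≤ r k := fun k hk => (bandSize_spec (hlt k hk)).1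
  have hr1' : ∀ k < p, (1 : ℝ) ≤ r k := fun k hk => by exact_mod_cast hr1 k hk
  have hrN : ∀ k < p, cumSize N k + r k ≤ N := fun k hk => (bandSize_spec (hlt k hk)).2.1
  have hrN' : ∀ k < p, (cumSize N k : ℝ) + r k ≤ N := fun k hk => by exact_mod_cast hrN k hk
  have hz0 : ∀ k < p, 0 < z k := by
    intro k hk
    have := hr1' k hk
    have h0 : (0 : ℝ) ≤ cumSize N k := Nat.cast_nonneg _
    exact div_pos (by linarith) hN'
  have hz1 : ∀ k < p, z k < 1 := by
    intro k hk
    have := hr1' k hk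
    have := hrN' k hk
    exact (div_lt_one hN').2 (by linarith)
  have hmono : Monotone (cumSize N) := monotone_nat_of_le_succ fun k => by simp [cumSize]
  have hzz : ∀ k < p, ∀ j < k, z j < z k := by
    intro k hk j hj
    have h1 := hr1' k hk
    have h2 := hr1' j (hj.trans hk)
    have h3 : cumSize N j + r j ≤ cumSize N k := hmono (Nat.succ_le_of_lt hj)
    have h3' : (cumSize N j : ℝ) + r j ≤ cumSize N k := by exact_mod_cast h3
    exact div_lt_div_of_pos_right (by linarith) hN'
  obtain ⟨x, hx1, hx2, hx3⟩ := exists_points p N r z (by rw [← hcum, hp]) hz0 hz1 hzz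
  refine ⟨x, p, hp, hlt, hx1, hx2, hx3.trans ?_⟩
  have hmean := mean_energy_le (fun k => (r k : ℝ)) (fun k => (cumSize N k : ℝ)) z p hN'
    (fun k => by rw [hcum]; push_cast; rfl) (by rw [hp]) (fun k hk => by linarith [hr1' k hk])
    (fun k _ => Nat.cast_nonneg _) hrN' (fun k => rfl)
  have hsumN : (N : ℝ) = ∑ k ∈ Finset.range p, (r k : ℝ) := by
    rw [← Nat.cast_sum, ← hcum, hp]
  have hself : ∑ k ∈ Finset.range p, (r k : ℝ) * (r k ^ 2 / (6 * N * (1 - z k ^ 2)) / 2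
          * (1 + 2 / 5 * (r k / (2 * N) / (1 - z k)) ^ 2))
      + ∑ k ∈ Finset.range p,
        (r k : ℝ) * (Real.log (1 - z k ^ 2) / 2 - Real.log (r k) + 1 / (2 * (z k * r k))) =
      N * (1 / 2 - Real.log (6 * N) / 2)
        + ∑ k ∈ Finset.range p, (r k : ℝ) * excess N (z k) (r k) := by
    have hc : (N : ℝ) * (1 / 2 - Real.log (6 * N) / 2)
        = ∑ k ∈ Finset.range p, (r k : ℝ) * (1 / 2 - Real.log (6 * N) / 2) := by
      rw [← Finset.sum_mul, ← hsumN]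
    rw [hc, ← Finset.sum_add_distrib, ← Finset.sum_add_distrib]
    refine Finset.sum_congr rfl fun k hk => ?_
    rw [Finset.mem_range] at hk
    have h1 := hr1' k hk
    have h2 : 0 < 1 - z k ^ 2 := by nlinarith [hz0 k hk, hz1 k hk]
    rw [excess, Real.log_div (by positivity) (by positivity), Real.log_mul (by positivity) h2.ne',
      Real.log_pow]
    push_cast
    ring
  have hsplit : ∑ k ∈ Finset.range p, ((r k : ℝ) ^ 2 * meanKer (z k) (z k)
        + r k * (Real.log (1 - z k ^ 2) / 2 - Real.log (r k) + 1 / (2 * (z k * r k)))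
        + 2 * ∑ j ∈ Finset.range k, r j * r k * meanKer (z k) (z j)) =
      ∑ k ∈ Finset.range p, ((r k : ℝ) ^ 2 * meanKer (z k) (z k)
        + 2 * ∑ j ∈ Finset.range k, r j * r k * meanKer (z k) (z j))
      + ∑ k ∈ Finset.range p,
        (r k : ℝ) * (Real.log (1 - z k ^ 2) / 2 - Real.log (r k) + 1 / (2 * (z k * r k))) := by
    rw [← Finset.sum_add_distrib]
    exact Finset.sum_congr rfl fun k _ => by ring
  rw [hsplit]
  linarith

/-- The total excess is an arbitrarily small proportion of `N`. -/
lemma sum_excess_le {N p : ℕ} {θ : ℝ} (hN : 0 < N) (hp : cumSize N p = N)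
    (hlt : ∀ k < p, cumSize N k < N) (hθ : 0 < θ) (hθ1 : θ ≤ 1 / 10)
    (hNθ : 3 ≤ N * θ ^ 5) :
    ∑ k ∈ Finset.range p, (bandSize N (cumSize N k) : ℝ)
        * excess N (((cumSize N k : ℝ) + (bandSize N (cumSize N k) : ℝ) / 2) / N)
          (bandSize N (cumSize N k)) ≤ 32 * θ * N := by
  have hN' : (0 : ℝ) < N := by exact_mod_cast hN
  set r : ℕ → ℝ := fun k => bandSize N (cumSize N k) with hr
  set S : ℕ → ℝ := fun k => cumSize N k with hSdef
  have hS : ∀ k, S (k + 1) = S k + r k := fun k => by simp [hSdef, hr, cumSize]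
  have hS0 : S 0 = 0 := by simp [hSdef, cumSize]
  have hSp : S p = N := by simp [hSdef, hp]
  have hr0 : ∀ k, 0 ≤ r k := fun k => Nat.cast_nonneg _
  have hN2 : 6 ≤ N * θ ^ 2 := by
    have h1 : θ ^ 3 ≤ (1 / 10) ^ 3 := pow_le_pow_left₀ hθ.le hθ1 3
    have h2 : N * θ ^ 2 * θ ^ 3 ≤ N * θ ^ 2 * (1 / 10) ^ 3 := by gcongr
    nlinarith
  -- so the size condition `12 ≤ N - S` of `bandSize_spec` holds away from the pole
  have hN1 : 60 ≤ θ * N := by nlinarith [mul_pos hN' hθ]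
  have hR : ∀ k < p, r k ≤ θ * N := by
    intro k hk
    have h := (bandSize_spec (hlt k hk)).2.2.1
    have h2 : r k ^ 2 ≤ (θ * N) ^ 2 := by
      refine h.trans ?_
      have h3 : 0 ≤ N * ((cumSize N k : ℝ) / N) ^ 2 := by positivity
      have h4 := mul_le_mul_of_nonneg_right hN2 hN'.le
      nlinarith
    exact (pow_le_pow_iff_left₀ (hr0 k) (by positivity) two_ne_zero).1 h2
  have hk : ∀ k ∈ Finset.range p, r k * excess N ((S k + r k / 2) / N) (r k) ≤
      2 * θ * r k + 10 * (if S k < θ * N then r k else 0)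
        + 10 * (if N - θ * N < S k then r k else 0) := by
    intro k hk
    rw [Finset.mem_range] at hk
    obtain ⟨h1, h2, h3, h4, h5⟩ := bandSize_spec (hlt k hk)
    have h1' : 1 ≤ r k := by simp only [hr]; exact_mod_cast h1
    have h2' : S k + r k ≤ N := by simp only [hr, hSdef]; exact_mod_cast h2
    have hten := excess_le_ten hN' (Nat.cast_nonneg _) h1' h2' h3 h4 rfl
    have hten' := mul_le_mul_of_nonneg_left hten (hr0 k)
    have hp1 : 0 ≤ 2 * θ * r k := mul_nonneg (by positivity) (hr0 k)
    have := hr0 k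
    split_ifs with ha hb hb
    · linarith
    · linarith
    · linarith
    · have hs := excess_le_small hN' hθ hθ1 hNθ (not_lt.1 ha) (not_lt.1 hb) h1' h2' h3
        (h5 (by simp only [hSdef] at hb; linarith)) rfl
      have := mul_le_mul_of_nonneg_left hs (hr0 k)
      linarith
  refine (Finset.sum_le_sum hk).trans ?_
  rw [Finset.sum_add_distrib, Finset.sum_add_distrib, ← Finset.mul_sum, ← Finset.mul_sum,
    ← Finset.mul_sum]
  have hsum : ∑ k ∈ Finset.range p, r k = N := by
    have := Finset.sum_range_sub S p
    rw [hSp, hS0, sub_zero] at this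
    rw [← this]
    exact Finset.sum_congr rfl fun k _ => by rw [hS]; ring
  have hlow := sum_ite_lt_le r S hS hS0 (a := θ * N) (R := θ * N) (by linarith) p
    (fun k _ => hr0 k) hR
  have hup := sum_ite_gt_le r S hS (b := N - θ * N) p (fun k _ => hr0 k)
  rw [hSp, max_eq_right (by linarith)] at hup
  rw [hsum]
  linarith

/-! ### Conclusion -/

/-- There is a constant `Λ > 0` such that for every `N ≥ 2` there are `N` distinct
points of `RP²` (unit vectors `x₁,…,x_N` with `x_i ≠ ±x_j` for `i ≠ j`) whose Green
energy is at most
`-(1/(4π)) N log N + (1/(2π)) (c_⋄ + 1 - (3/2) log 2) N + Λ √N log N`. -/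
theorem low_green_energy_points_on_projective_plane :
    ∃ Λ : ℝ, 0 < Λ ∧ ∀ N : ℕ, 2 ≤ N → ∃ x : Fin N → Esp,
      (∀ i, ‖x i‖ = 1) ∧ (∀ i j, i ≠ j → x i ≠ x j ∧ x i ≠ -x j) ∧
      EGreen x ≤ -(1 / (4*π)) * N * Real.log N
        + (1 / (2*π)) * (cdiamond + 1 - (3/2) * Real.log 2) * N
        + Λ * Real.sqrt N * Real.log N := by
  let T : ℕ → ℝ := fun N => -(1 / (4*π)) * N * Real.log N
        + (1 / (2*π)) * (cdiamond + 1 - (3/2) * Real.log 2) * N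
  have hx : ∀ N : ℕ, ∃ x : Fin N → Esp, 0 < N → ∃ p : ℕ,
    cumSize N p = N ∧ (∀ k < p, cumSize N k < N) ∧
    (∀ i, ‖x i‖ = 1) ∧ (∀ i j, i ≠ j → x i ≠ x j ∧ x i ≠ -x j) ∧
    EPlog x ≤ (N : ℝ) ^ 2 * (1 - Real.log 2) + N * (1 / 2 - Real.log (6 * N) / 2) + 1
      + ∑ k ∈ Finset.range p, (bandSize N (cumSize N k) : ℝ)
        * excess N (((cumSize N k : ℝ) + (bandSize N (cumSize N k) : ℝ) / 2) / N)
          (bandSize N (cumSize N k)) := by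
    intro N
    by_cases hN : 0 < N
    · obtain ⟨x, hx⟩ := exists_points_bands N hN
      exact ⟨x, fun _ => hx⟩
    · exact ⟨0, fun h => absurd h hN⟩
  choose x hx using hx
  set s := cdiamond - (1 - Real.log 3) / 2 with hs
  have hs0 : 0 < s := sub_pos.2 const_lt_cdiamond
  set θ := min (1 / 10) (s / 33) with hθ
  have hθ0 : 0 < θ := lt_min (by norm_num) (by positivity)
  have hθ1 : θ ≤ 1 / 10 := min_le_left _ _
  have hθs : 33 * θ ≤ s := by
    have := min_le_right (1 / 10) (s / 33)
    linarith
  obtain ⟨N₀, hN₀⟩ := exists_nat_gt (3 / θ ^ 5)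
  have hlarge : ∀ N : ℕ, 0 < N → N₀ ≤ N → EGreen (x N) ≤ T N := by
    intro N hN hN₁
    have hN' : (0 : ℝ) < N := by exact_mod_cast hN
    have hN₁' : (N₀ : ℝ) ≤ N := by exact_mod_cast hN₁
    have hNθ : 3 ≤ N * θ ^ 5 := by
      rw [← div_le_iff₀ (by positivity)]
      linarith
    obtain ⟨p, hp, hlt, -, -, hE⟩ := hx N hN
    have hexc := sum_excess_le hN hp hlt hθ0 hθ1 hNθ
    have h1 : 1 ≤ θ * N := by
      have h4 : θ ^ 4 ≤ 1 := pow_le_one₀ hθ0.le (by linarith)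
      have : θ * N * θ ^ 4 ≤ θ * N * 1 := by gcongr
      linarith
    have hsN : 33 * θ * N ≤ s * N := by gcongr
    have hlog : Real.log (6 * N) = Real.log 2 + Real.log 3 + Real.log N := by
      rw [Real.log_mul (by norm_num) hN'.ne', show (6 : ℝ) = 2 * 3 by norm_num,
        Real.log_mul (by norm_num) (by norm_num)]
    have hT : T N = 1 / (2 * π) * (-(N * Real.log N) / 2
        + (cdiamond + 1 - 3 / 2 * Real.log 2) * N) := by
      simp only [T]
      field_simp
      ring
    rw [hT, EGreen]
    gcongr
    rw [hlog] at hE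
    rw [hs] at hsN
    linarith
  refine ⟨1 + ∑ n ∈ Finset.range N₀, |EGreen (x n) - T n| / (√n * Real.log n), ?_, ?_⟩
  · have : 0 ≤ ∑ n ∈ Finset.range N₀, |EGreen (x n) - T n| / (√n * Real.log n) :=
      Finset.sum_nonneg fun n _ => div_nonneg (abs_nonneg _)
        (mul_nonneg (Real.sqrt_nonneg _) (Real.log_natCast_nonneg n))
    linarith
  intro N hN
  obtain ⟨p, -, -, hx1, hx2, -⟩ := hx N (by omega)
  refine ⟨x N, hx1, hx2, ?_⟩
  change EGreen (x N) ≤ T N + _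
  have hN' : (2 : ℝ) ≤ N := by exact_mod_cast hN
  have hpos : 0 < √(N : ℝ) * Real.log N :=
    mul_pos (Real.sqrt_pos.2 (by linarith)) (Real.log_pos (by linarith))
  have hnn : ∀ n ∈ Finset.range N₀, 0 ≤ |EGreen (x n) - T n| / (√n * Real.log n) :=
    fun n _ => div_nonneg (abs_nonneg _)
      (mul_nonneg (Real.sqrt_nonneg _) (Real.log_natCast_nonneg n))
  rw [mul_assoc]
  -- finitely many `N` only enter through the size of `Λ`
  by_cases hN₁ : N < N₀
  · have h := Finset.single_le_sum hnn (Finset.mem_range.2 hN₁)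
    have h2 := mul_le_mul_of_nonneg_right h hpos.le
    rw [div_mul_cancel₀ _ hpos.ne'] at h2
    have h3 := le_abs_self (EGreen (x N) - T N)
    linarith
  · have h := hlarge N (by omega) (by omega)
    have h2 := mul_nonneg (Finset.sum_nonneg hnn) hpos.le
    linarith
end
end

section
/- For every A ≥ 1 there exists a constant K > 0 with the following property. Let M ≥ 2 and let r_1,…,r_M be positive integers with j/A ≤ r_j ≤ A·j for all 1 ≤ j ≤ M. Set D = 1 + 2·Σ_{k=1}^{M−1} r_k + r_M and z_j = 1 − (1 + r_j + 2·Σ_{k=1}^{j−1} r_k)/D for 1 ≤ j ≤ M (so z_M = 0). Then z_{M−j} ≥ K·j/M for all 1 ≤ j ≤ M−1. -/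
/-!
Write `S n = r_n + 2 ∑_{k<n} r_k`. Then `D = 1 + S M` and `z_a = (S M - S a) / D`. Since
`S (n+1) - S n = r_n + r_{n+1}` lies between `(2n+1)/A` and `A (2n+1)`, and
`2n+1 = (n+1)² - n²`, telescoping yields `S M ≤ A M²` and
`S M - S (M-j) ≥ (M² - (M-j)²)/A ≥ j M / A`. Hence `D ≤ 2 A M²`, and `K = 1/(2A²)` works.
-/

/-- The sum `r_n + 2 ∑_{k=1}^{n-1} r_k`, which equals `D (1 - z_n) - 1`. -/
noncomputable def trapSum (r : ℕ → ℕ) (n : ℕ) : ℝ :=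
  (r n : ℝ) + 2 * ∑ k ∈ Finset.Ico 1 n, (r k : ℝ)

lemma trapSum_succ (r : ℕ → ℕ) {n : ℕ} (hn : 1 ≤ n) :
    trapSum r (n + 1) = trapSum r n + r n + r (n + 1) := by
  unfold trapSum
  rw [Finset.sum_Ico_succ_top hn]
  ring

lemma trapSum_le {A : ℝ} {M : ℕ} {r : ℕ → ℕ}
    (h : ∀ j, 1 ≤ j → j ≤ M → (r j : ℝ) ≤ A * j) (n : ℕ) (hn : 1 ≤ n) :
    n ≤ M → trapSum r n ≤ A * (n : ℝ) ^ 2 := by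
  induction n, hn using Nat.le_induction with
  | base =>
    intro hM
    have := h 1 le_rfl hM
    simpa [trapSum] using this
  | succ n hn ih =>
    intro hM
    have h1 := ih (by omega)
    have h2 := h n hn (by omega)
    have h3 := h (n + 1) (by omega) hM
    rw [trapSum_succ r hn]
    push_cast at *
    linarith

lemma le_trapSum_sub {A : ℝ} {M : ℕ} {r : ℕ → ℕ}
    (h : ∀ j, 1 ≤ j → j ≤ M → (j : ℝ) / A ≤ (r j : ℝ)) {a : ℕ} (ha : 1 ≤ a) (n : ℕ)
    (hn : a ≤ n) :
    n ≤ M → ((n : ℝ) ^ 2 - (a : ℝ) ^ 2) / A ≤ trapSum r n - trapSum r a := by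
  induction n, hn using Nat.le_induction with
  | base => simp
  | succ n hn ih =>
    intro hM
    have h1 := ih (by omega)
    have h2 := h n (by omega) (by omega)
    have h3 := h (n + 1) (by omega) hM
    rw [trapSum_succ r (by omega)]
    have e : (((n + 1 : ℕ) : ℝ) ^ 2 - (a : ℝ) ^ 2) / A
        = ((n : ℝ) ^ 2 - (a : ℝ) ^ 2) / A + (n : ℝ) / A + ((n + 1 : ℕ) : ℝ) / A := by
      push_cast
      ring
    linarith


/-- **Lower bound for the heights of the projective Diamond ensemble**
(Lemma 4.2 of the paper). For every `A ≥ 1` there is `K > 0` such that, whenever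
`M ≥ 2`, `r_1,…,r_M` are positive integers with `j/A ≤ r_j ≤ A j`,
`D = 1 + 2 ∑_{k=1}^{M-1} r_k + r_M` and
`z_j = 1 - (1 + r_j + 2 ∑_{k<j} r_k)/D`, we have `z_{M-j} ≥ K j / M` for
`1 ≤ j ≤ M-1`. -/
theorem heights_lower_bound :
    ∀ A : ℝ, 1 ≤ A → ∃ K : ℝ, 0 < K ∧
    ∀ M : ℕ, 2 ≤ M →
    ∀ r : ℕ → ℕ,
    (∀ j, 1 ≤ j → j ≤ M → 1 ≤ r j) →
    (∀ j, 1 ≤ j → j ≤ M → (j : ℝ) / A ≤ (r j : ℝ) ∧ (r j : ℝ) ≤ A * j) →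
    ∀ D : ℝ, D = 1 + 2 * (∑ k ∈ Finset.Icc 1 (M-1), (r k : ℝ)) + (r M : ℝ) →
    ∀ z : ℕ → ℝ,
    (∀ j, 1 ≤ j → j ≤ M →
      z j = 1 - (1 + (r j : ℝ) + 2 * ∑ k ∈ Finset.Ico 1 j, (r k : ℝ)) / D) →
    ∀ j, 1 ≤ j → j ≤ M - 1 → z (M - j) ≥ K * j / M := by
  intro A hA
  have hA0 : 0 < A := by linarith
  refine ⟨1 / (2 * A ^ 2), by positivity, ?_⟩
  intro M hM r _ hr D hD z hz j hj hjM
  obtain ⟨a, rfl⟩ : ∃ a, M = a + j := ⟨M - j, by omega⟩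
  have ha : 1 ≤ a := by omega
  have hDS : D = 1 + trapSum r (a + j) := by
    have hI : Finset.Icc 1 (a + j - 1) = Finset.Ico 1 (a + j) := by
      ext x
      simp only [Finset.mem_Icc, Finset.mem_Ico]
      omega
    rw [hD, hI]
    unfold trapSum
    ring
  have hD0 : 0 < D := by
    rw [hDS]
    unfold trapSum
    positivity
  have hup := trapSum_le (fun j h1 h2 => (hr j h1 h2).2) (a + j) (by omega) le_rfl
  have hlow := le_trapSum_sub (fun j h1 h2 => (hr j h1 h2).1) ha (a + j) (by omega) le_rfl
  have hM1 : (1 : ℝ) ≤ ((a + j : ℕ) : ℝ) := by exact_mod_cast (by omega : 1 ≤ a + j)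
  have hD2 : D ≤ 2 * A * ((a + j : ℕ) : ℝ) ^ 2 := by
    have : 1 ≤ A * ((a + j : ℕ) : ℝ) ^ 2 := one_le_mul_of_one_le_of_one_le hA (one_le_pow₀ hM1)
    linarith
  have hza : z (a + j - j) = (trapSum r (a + j) - trapSum r a) / D := by
    rw [Nat.add_sub_cancel, hz a ha (by omega), eq_div_iff hD0.ne', sub_mul,
      div_mul_cancel₀ _ hD0.ne', hDS]
    unfold trapSum
    ring
  have hnum : (j : ℝ) * ((a + j : ℕ) : ℝ) / A ≤ trapSum r (a + j) - trapSum r a := by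
    refine le_trans ?_ hlow
    gcongr
    push_cast
    nlinarith [mul_nonneg (Nat.cast_nonneg (α := ℝ) a) (Nat.cast_nonneg (α := ℝ) j)]
  rw [hza, ge_iff_le, le_div_iff₀ hD0]
  refine le_trans ?_ hnum
  calc 1 / (2 * A ^ 2) * (j : ℝ) / ((a + j : ℕ) : ℝ) * D
      ≤ 1 / (2 * A ^ 2) * (j : ℝ) / ((a + j : ℕ) : ℝ) * (2 * A * ((a + j : ℕ) : ℝ) ^ 2) := by
        gcongr
    _ = (j : ℝ) * ((a + j : ℕ) : ℝ) / A := by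
        have : ((a + j : ℕ) : ℝ) ≠ 0 := by linarith
        field_simp
end
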